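/- arXiv:2401.03204 — 3 statements merged into one kernel-verified Lean document; each statement's English description precedes it below -/
import Mathlib

section
/- Theorem 5: For the quaternary sequence u₁₀ = φ[s₁+1, s₃] of period p, the 4-adic complexity satisfies Φ₄(u₁₀) ≥ ⌊log₄((4^p − 1)/(3(1+2p)) + 1)⌋. -/
open Finset

/-- The cyclotomic class `D_i` of order 4 modulo `p` with respect to the
primitive root `θ`: `{θ^(i+4j) mod p : 0 ≤ j < (p-1)/4}`. -/
def cycD (p θ i : ℕ) : Finset ℕ :=
  (Finset.range ((p - 1) / 4)).image fun j => θ ^ (i + 4 * j) % p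

/-- The binary sequence `s₁` with support set `D₀ ∪ D₁`. -/
def seqS1 (p θ : ℕ) (t : ℕ) : ℕ := if t ∈ cycD p θ 0 ∪ cycD p θ 1 then 1 else 0

/-- The binary sequence `s₂` with support set `D₀ ∪ D₃`. -/
def seqS2 (p θ : ℕ) (t : ℕ) : ℕ := if t ∈ cycD p θ 0 ∪ cycD p θ 3 then 1 else 0

/-- The binary sequence `s₃` with support set `D₁ ∪ D₂`. -/
def seqS3 (p θ : ℕ) (t : ℕ) : ℕ := if t ∈ cycD p θ 1 ∪ cycD p θ 2 then 1 else 0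

/-- The binary sequence `s₄` with support set `D₂ ∪ D₃`. -/
def seqS4 (p θ : ℕ) (t : ℕ) : ℕ := if t ∈ cycD p θ 2 ∪ cycD p θ 3 then 1 else 0

/-- The bitwise complement `s + 1` of a binary sequence. -/
def seqCompl (s : ℕ → ℕ) (t : ℕ) : ℕ := 1 - s t

/-- The inverse Gray mapping: `φ[0,0]=0, φ[0,1]=1, φ[1,1]=2, φ[1,0]=3`. -/
def gray (a b : ℕ) : ℕ := if a = 0 then b else 3 - b

/-- The quaternary sequence `φ[r,s] : t ↦ φ[r(t), s(t)]`. -/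
def graySeq (r s : ℕ → ℕ) (t : ℕ) : ℕ := gray (r t) (s t)

/-- The generating value `U(4) = Σ_{t=0}^{p-1} u(t)·4^t` of a quaternary
sequence `u` of period `p`. -/
def seqVal (p : ℕ) (u : ℕ → ℕ) : ℕ := ∑ t ∈ Finset.range p, u t * 4 ^ t

/-- The 4-adic complexity `Φ₄(u) = ⌊log₄((4^p − 1)/gcd(4^p − 1, U(4)) + 1)⌋`
of a quaternary sequence `u` of period `p`. -/
noncomputable def adicComplexity4 (p : ℕ) (u : ℕ → ℕ) : ℤ :=
  ⌊Real.logb 4 (((4 ^ p - 1 : ℕ) : ℝ) / ((Nat.gcd (4 ^ p - 1) (seqVal p u) : ℕ) : ℝ) + 1)⌋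


lemma aux_four : (4 : ZMod 3) = 1 := by decide

lemma aux_prime_factor (p : ℕ) (hp : p.Prime) (hp8 : p % 8 = 5) (M : ℕ) (hM : M * 3 = 4 ^ p - 1)
    (q : ℕ) (hq : q.Prime) (hqM : q ∣ M) :
    q ≠ 3 ∧ (4 : ZMod q) ^ p = 1 ∧ ∃ m : ℕ, 1 ≤ m ∧ q = 1 + 2 * p * m := by
  have h4 : M * 3 + 1 = 4 ^ p := by
    have : 1 ≤ 4 ^ p := Nat.one_le_pow _ _ (by norm_num)
    omega
  have := Fact.mk hq
  have h41 : (4 : ZMod q) ^ p = 1 := by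
    have h := congrArg (Nat.cast : ℕ → ZMod q) h4
    push_cast at h
    rw [(ZMod.natCast_eq_zero_iff M q).2 hqM] at h
    simpa using h.symm
  have hq3 : q ≠ 3 := by
    rintro rfl
    have hM2 : M = ∑ i ∈ range p, 4 ^ i := by
      have := Nat.geomSum_eq (m := 4) (by norm_num) p
      rw [this]; omega
    have h := (ZMod.natCast_eq_zero_iff M 3).2 hqM
    rw [hM2] at h
    push_cast at h
    rw [aux_four] at h
    simp at h
    have := (ZMod.natCast_eq_zero_iff p 3).1 h
    have := (Nat.prime_dvd_prime_iff_eq Nat.prime_three hp).1 this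
    omega
  have hq2 : q ≠ 2 := by
    rintro rfl
    have : 2 ∣ 4 ^ p := dvd_pow (by norm_num) hp.ne_zero
    omega
  refine ⟨hq3, h41, ?_⟩
  have := Fact.mk hp
  have hne : (4 : ZMod q) ≠ 1 := by
    intro h
    have h3 : ((3 : ℕ) : ZMod q) = 0 := by
      push_cast
      linear_combination h
    have := (ZMod.natCast_eq_zero_iff 3 q).1 h3
    exact hq3 ((Nat.prime_dvd_prime_iff_eq hq Nat.prime_three).1 this)
  have hord : orderOf (4 : ZMod q) = p := orderOf_eq_prime h41 hne
  have h40 : (4 : ZMod q) ≠ 0 := by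
    intro h
    rw [h, zero_pow hp.ne_zero] at h41
    exact zero_ne_one h41
  have hd : p ∣ q - 1 := by
    rw [← hord]
    exact orderOf_dvd_of_pow_eq_one (ZMod.pow_card_sub_one_eq_one h40)
  have hodd := hq.odd_of_ne_two hq2
  have h2 : 2 ∣ q - 1 := by
    obtain ⟨k, hk⟩ := hodd
    exact ⟨k, by omega⟩
  have hc : Nat.Coprime 2 p := by
    rw [Nat.coprime_primes Nat.prime_two hp]; omega
  obtain ⟨m, hm⟩ := hc.mul_dvd_of_dvd_of_dvd h2 hd
  have := hq.two_le
  refine ⟨m, ?_, by omega⟩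
  rcases Nat.eq_zero_or_pos m with h | h
  · subst h; omega
  · exact h

lemma aux_pos (p : ℕ) (hp5 : 5 ≤ p) (b : ℤ) (hb : b ^ 2 ≤ p) :
    0 ≤ (9 + 5 * (p : ℤ)) ^ 2 - p * (6 + 4 * b) ^ 2 := by
  have h : (p : ℝ) * (6 + 4 * b) ^ 2 ≤ (9 + 5 * (p : ℝ)) ^ 2 := by
    set s := Real.sqrt p with hs
    have hs2 : s ^ 2 = p := Real.sq_sqrt (by positivity)
    have hs0 : 0 ≤ s := Real.sqrt_nonneg _
    have hbs : |(b : ℝ)| ≤ s := Real.abs_le_sqrt (by exact_mod_cast hb)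
    have h1 : |s * (6 + 4 * (b : ℝ))| ≤ 9 + 5 * s ^ 2 := by
      rw [abs_le] at hbs ⊢
      constructor <;> nlinarith [sq_nonneg (s - 3), mul_nonneg hs0 (sub_nonneg.2 hbs.2), mul_nonneg hs0 (by linarith [hbs.1] : 0 ≤ s + b)]
    rw [← hs2, ← mul_pow]
    exact sq_le_sq' (by linarith [(abs_le.1 h1).1]) (abs_le.1 h1).2
  have h' : (p : ℤ) * (6 + 4 * b) ^ 2 ≤ (9 + 5 * (p : ℤ)) ^ 2 := by exact_mod_cast h
  linarith

set_option maxHeartbeats 1000000 in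
lemma aux_nt (p : ℕ) (hp : p.Prime) (hp8 : p % 8 = 5) (M : ℕ) (hM : M * 3 = 4 ^ p - 1)
    (b : ℤ) (hb : b ^ 2 ≤ p) (D : ℕ) (hDM : D ∣ M)
    (hD : (D : ℤ) ∣ (9 + 5 * (p : ℤ)) ^ 2 - p * (6 + 4 * b) ^ 2) : D ≤ 1 + 2 * p := by
  by_contra hlt
  push Not at hlt
  have hp5 : 5 ≤ p := by omega
  have hM0 : M ≠ 0 := by
    intro h
    have : 4 ^ 1 ≤ 4 ^ p := Nat.pow_le_pow_right (by norm_num) (by omega)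
    omega
  have hpf := aux_prime_factor p hp hp8 M hM
  have hpos : 0 < (9 + 5 * (p : ℤ)) ^ 2 - p * (6 + 4 * b) ^ 2 := by
    rcases (aux_pos p hp5 b hb).lt_or_eq with h | h
    · exact h
    · exfalso
      have h9 : (p : ℤ) ∣ ((9 : ℕ) : ℤ) ^ 2 := ⟨(6 + 4 * b) ^ 2 - 90 - 25 * p, by push_cast; linarith⟩
      have h9' : p ∣ 9 ^ 2 := by exact_mod_cast h9
      have h3 : p ∣ 3 ^ 4 := by simpa using h9'
      have := (Nat.prime_dvd_prime_iff_eq hp Nat.prime_three).1 (hp.dvd_of_dvd_pow h3)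
      omega
  have h16 : (16 : ℤ) ∣ (9 + 5 * (p : ℤ)) ^ 2 - p * (6 + 4 * b) ^ 2 := by
    obtain ⟨n, hn⟩ : ∃ n : ℤ, (p : ℤ) = 8 * n + 5 := ⟨p / 8, by omega⟩
    rw [hn]
    ring_nf
    have : (16 : ℤ) ∣ 976 + n * 4432 - n * b * 384 - n * b ^ 2 * 128 + (n ^ 2 * 1600 - b * 240) - b ^ 2 * 80 := by
      omega
    omega
  have hDodd : ¬ 2 ∣ D := by
    intro h
    obtain ⟨_, _, m, _, hm⟩ := hpf 2 Nat.prime_two (h.trans hDM)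
    have : 2 * p * m = 2 * (p * m) := by ring
    omega
  have hcop : IsCoprime (16 : ℤ) (D : ℤ) := by
    have : Nat.Coprime 16 D := by
      rw [show 16 = 2 ^ 4 by norm_num]
      exact Nat.Coprime.pow_left _ ((Nat.Prime.coprime_iff_not_dvd Nat.prime_two).2 hDodd)
    exact_mod_cast Nat.isCoprime_iff_coprime.2 this
  obtain ⟨k, hk⟩ := hcop.mul_dvd h16 hD
  have hk1 : 1 ≤ k := by
    by_contra hk0
    have : k ≤ 0 := by omega
    have h2 : (16 : ℤ) * D * k ≤ 0 := mul_nonpos_of_nonneg_of_nonpos (by positivity) this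
    omega
  have hDle : 16 * (D : ℤ) ≤ (9 + 5 * (p : ℤ)) ^ 2 := by
    have h1 : 16 * (D : ℤ) * 1 ≤ 16 * D * k := mul_le_mul_of_nonneg_left hk1 (by positivity)
    have h2 : 0 ≤ (p : ℤ) * (6 + 4 * b) ^ 2 := by positivity
    linarith
  have hDprime : D.Prime := by
    have hD1 : D ≠ 1 := by omega
    obtain ⟨r, hr⟩ := Nat.minFac_dvd D
    have hq := Nat.minFac_prime hD1
    by_cases hr1 : r = 1
    · rw [hr1, mul_one] at hr
      rw [hr]; exact hq
    · exfalso
      have hq' := Nat.minFac_prime hr1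
      have hrD : r ∣ D := ⟨_, by rw [mul_comm]; exact hr⟩
      obtain ⟨_, _, m, hm, hm'⟩ := hpf _ hq ((Nat.minFac_dvd D).trans hDM)
      obtain ⟨_, _, n, hn, hn'⟩ := hpf _ hq' ((Nat.minFac_dvd r).trans (hrD.trans hDM))
      have h1 : 1 + 2 * p ≤ D.minFac := by nlinarith
      have hr0 : 0 < r := Nat.pos_of_ne_zero (by rintro rfl; omega)
      have h2 : 1 + 2 * p ≤ r := le_trans (by nlinarith) (Nat.minFac_le hr0)
      have h3 : (1 + 2 * p) * (1 + 2 * p) ≤ D := by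
        rw [hr]; exact Nat.mul_le_mul h1 h2
      have h4 : ((1 + 2 * p) * (1 + 2 * p) : ℤ) ≤ D := by exact_mod_cast h3
      have h5 : (5 : ℤ) ≤ p := by exact_mod_cast hp5
      nlinarith
  obtain ⟨hD3, hD4, m, hm1, hDm⟩ := hpf D hDprime hDM
  have hm2 : 2 ≤ m := by
    by_contra h
    have : m = 1 := by omega
    subst this; omega
  obtain ⟨l, hl⟩ : ∃ l : ℤ, l = 54 + 25 * p - 48 * b - 16 * b ^ 2 - 32 * k * m := ⟨_, rfl⟩
  have hDm' : (D : ℤ) = 1 + 2 * p * m := by exact_mod_cast hDm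
  have e1 : 16 * k = 81 + p * l := by
    rw [hl]
    rw [hDm'] at hk
    linear_combination -hk
  have e2 : l + 2 * m * (81 + p * l) = 90 + 25 * p - 4 * (2 * b + 3) ^ 2 := by
    rw [← e1, hl]; ring
  have hpz : (5 : ℤ) ≤ p := by exact_mod_cast hp5
  have hmz : (2 : ℤ) ≤ m := by exact_mod_cast hm2
  have hp8z : (p : ℤ) % 8 = 5 := by exact_mod_cast hp8
  have hlo : -17 ≤ l := by
    by_contra h
    push Not at h
    nlinarith
  have hhi : ∀ c : ℤ, c ≤ m → 1 ≤ l → c * l ≤ 12 := by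
    intro c hc h1
    by_contra h
    push Not at h
    have h13 : 13 ≤ m * l := le_trans h (mul_le_mul_of_nonneg_right hc (by omega))
    have : 13 * (p : ℤ) ≤ (m * l) * p := mul_le_mul_of_nonneg_right h13 (by omega)
    nlinarith [sq_nonneg (2 * b + 3)]
  have hl6 : l ≤ 6 := by
    by_contra h
    have := hhi 2 hmz (by omega)
    omega
  have hl3 : l = 3 ∨ p = 5 ∧ l = -13 ∨ p = 13 ∧ l = -5 := by
    have hp3 : p ≠ 0 := by omega
    clear hk hl e2 hpf hD hpos h16 hDle hb hD4 hM hhi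
    interval_cases l <;> omega
  rcases hl3 with h | ⟨h, h'⟩ | ⟨h, h'⟩
  · subst h
    have hm4 : m ≤ 4 := by
      have := hhi m le_rfl (by norm_num)
      omega
    have := Fact.mk hDprime
    interval_cases m
    · -- D = 4p+1
      have hsq : IsSquare (2 : ZMod D) := by
        rw [ZMod.euler_criterion D (a := 2)]
        · have : D / 2 = 2 * p := by omega
          rw [this, pow_mul]
          norm_num
          exact hD4
        · intro h
          have := (ZMod.natCast_eq_zero_iff 2 D).1 (by exact_mod_cast h)
          have := Nat.le_of_dvd (by norm_num) this
          omega
      rw [ZMod.exists_sq_eq_two_iff (by omega)] at hsq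
      omega
    · -- D = 6p+1
      have h7 : (7 : ℤ) ∣ 2 * b + 3 := by
        have : (7 : ℤ) ∣ (2 * b + 3) ^ 2 := by push_cast at e2; omega
        exact Int.Prime.dvd_pow' (by norm_num) this
      obtain ⟨c, hc⟩ := h7
      rw [hc] at e2
      have h7D : 7 ∣ D := by
        have : (7 * c) ^ 2 = 49 * c ^ 2 := by ring
        rw [this] at e2
        push_cast at e2
        omega
      have := (Nat.prime_dvd_prime_iff_eq (by norm_num) hDprime).1 h7D
      omega
    · -- D = 8p+1
      have h3D : ¬ 3 ∣ D := fun h => hD3 ((Nat.prime_dvd_prime_iff_eq Nat.prime_three hDprime).1 h).symm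
      have hp3 : ¬ 3 ∣ p := by
        intro h
        have := (Nat.prime_dvd_prime_iff_eq Nat.prime_three hp).1 h
        omega
      have hb3 : (2 * b + 3) ^ 2 % 3 = 0 ∨ (2 * b + 3) ^ 2 % 3 = 1 := by
        have : (2 * b + 3) % 3 = 0 ∨ (2 * b + 3) % 3 = 1 ∨ (2 * b + 3) % 3 = 2 := by omega
        rcases this with h | h | h <;> simp [pow_two, Int.mul_emod, h]
      push_cast at e2
      omega
  · subst h; subst h'
    have hbl : b ≤ 2 := by push_cast at hb; nlinarith
    have hbh : -2 ≤ b := by push_cast at hb; nlinarith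
    have hM' : M = 341 := by omega
    subst hM'
    have hm7 : (m : ℤ) ≤ 7 := by
      push_cast at e2
      linarith [sq_nonneg (2 * b + 3)]
    replace hm7 : m ≤ 7 := by exact_mod_cast hm7
    rw [hDm] at hDM
    clear hpf hhi hD hk
    interval_cases m <;> first | (revert hDM; decide) | (interval_cases b <;> omega)
  · subst h; subst h'
    have hM' : M = 22369621 := by omega
    subst hM'
    have hm7 : (m : ℤ) ≤ 14 := by
      push_cast at e2
      linarith [sq_nonneg (2 * b + 3)]
    replace hm7 : m ≤ 14 := by exact_mod_cast hm7
    rw [hDm] at hDM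
    clear hpf hhi hD hk
    interval_cases m <;> revert hDM <;> decide
open Complex in
lemma aux_char (p : ℕ) (hp : p.Prime) (hp8 : p % 8 = 5) (θ : ℕ)
    (hθ : IsPrimitiveRoot (θ : ZMod p) (p - 1)) :
    (∀ a : ZMod p, a ≠ 0 → ∃ n < p - 1, (θ : ZMod p) ^ n = a) ∧
    ∃ χ : MulChar (ZMod p) ℂ, χ (θ : ZMod p) = I := by
  have := Fact.mk hp
  have hpos : 0 < p - 1 := by omega
  have : NeZero (p - 1) := ⟨by omega⟩
  have hgen : ∀ a : ZMod p, a ≠ 0 → ∃ n < p - 1, (θ : ZMod p) ^ n = a := fun a ha =>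
    hθ.eq_pow_of_pow_eq_one (ZMod.pow_card_sub_one_eq_one ha)
  refine ⟨hgen, ?_⟩
  have hu := hθ.isUnit (by omega)
  have hI : (Units.mk0 I I_ne_zero) ∈ rootsOfUnity (Fintype.card (ZMod p)ˣ) ℂ := by
    rw [ZMod.card_units_eq_totient, Nat.totient_prime hp, _root_.mem_rootsOfUnity]
    apply Units.ext
    push_cast
    rw [Units.val_mk0]
    obtain ⟨k, hk⟩ : ∃ k, p - 1 = 4 * k := ⟨(p - 1) / 4, by omega⟩
    rw [hk, pow_mul]
    simp
  have hg : ∀ x : (ZMod p)ˣ, x ∈ Subgroup.zpowers hu.unit := by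
    intro x
    obtain ⟨n, _, hn⟩ := hgen x x.ne_zero
    refine ⟨n, ?_⟩
    ext
    simpa using hn
  refine ⟨MulChar.ofRootOfUnity hI hg, ?_⟩
  have := MulChar.ofRootOfUnity_spec hI hg
  simpa using this

open Complex in
lemma aux_gauss (p : ℕ) (hp : p.Prime) (hp8 : p % 8 = 5) (θ : ℕ)
    (hgen : ∀ a : ZMod p, a ≠ 0 → ∃ n < p - 1, (θ : ZMod p) ^ n = a)
    (hord : (θ : ZMod p) ^ ((p - 1) / 2) = -1)
    [Fact p.Prime]
    (χ : MulChar (ZMod p) ℂ) (hχ : χ (θ : ZMod p) = I)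
    (ψ : AddChar (ZMod p) ℂ) (hψ : ψ.IsPrimitive)
    (η : ℕ → ℂ) (hη : ∀ i, η i = ∑ a, if χ a = I ^ i then ψ a else 0) :
    ∃ b : ℤ, b ^ 2 ≤ p ∧ η 0 + η 1 + η 2 + η 3 = -1 ∧
      (η 0 - η 2) ^ 2 + (η 1 - η 3) ^ 2 = - p ∧
      2 * (η 0 - η 2) * (η 1 - η 3) = b * (η 0 + η 2 - η 1 - η 3) ∧
      (η 0 + η 2 - η 1 - η 3) ^ 2 = p := by
  have hI1 : I ≠ 1 := by intro h; simpa using congrArg Complex.re h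
  have hI2 : I ≠ -1 := by intro h; simpa using congrArg Complex.re h
  have hI3 : -I ≠ 1 := by intro h; simpa using congrArg Complex.re h
  have hI4 : I ≠ -I := by
    intro h
    have := congrArg Complex.im h
    norm_num at this
  have h11 : (1 : ℂ) ≠ -1 := by norm_num
  have hval : ∀ a : ZMod p, a ≠ 0 → χ a = 1 ∨ χ a = I ∨ χ a = -1 ∨ χ a = -I := by
    intro a ha
    obtain ⟨n, _, rfl⟩ := hgen a ha
    rw [map_pow, hχ, Complex.I_pow_eq_pow_mod]
    have : n % 4 < 4 := Nat.mod_lt _ (by norm_num)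
    interval_cases n % 4 <;> simp
  have I3 : I ^ 3 = -I := by rw [pow_succ, I_sq]; ring
  have hcases : ∀ a : ZMod p, (a = 0 ∧ χ a = 0) ∨ (a ≠ 0 ∧ (χ a = 1 ∨ χ a = I ∨ χ a = -1 ∨ χ a = -I)) := by
    intro a
    by_cases h : a = 0
    · left; exact ⟨h, by rw [h]; exact χ.map_zero⟩
    · right; exact ⟨h, hval a h⟩
  have e0 : (0 : ℂ) ≠ -I := by intro h; exact I_ne_zero (by linear_combination h)
  have n0 : (0 : ℂ) ≠ I := I_ne_zero.symm
  have n1 : (1 : ℂ) ≠ I := hI1.symm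
  have n2 : (-1 : ℂ) ≠ I := hI2.symm
  have n3 : (1 : ℂ) ≠ -I := hI3.symm
  have n4 : -I ≠ I := hI4.symm
  have n5 : (-1 : ℂ) ≠ 1 := h11.symm
  have n6 : -I ≠ -1 := by intro h; exact hI1 (by linear_combination -h)
  have n7 : (-1 : ℂ) ≠ -I := n6.symm
  have n8 : (0 : ℂ) ≠ 1 := zero_ne_one
  have n9 : (0 : ℂ) ≠ -1 := by norm_num
  have q0 : η 0 = ∑ a, if χ a = 1 then ψ a else 0 := by rw [hη 0]; simp
  have q1 : η 1 = ∑ a, if χ a = I then ψ a else 0 := by rw [hη 1]; simp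
  have q2 : η 2 = ∑ a, if χ a = -1 then ψ a else 0 := by rw [hη 2]; simp
  have q3 : η 3 = ∑ a, if χ a = -I then ψ a else 0 := by rw [hη 3, I3]
  have g1 : gaussSum χ ψ = (η 0 - η 2) + I * (η 1 - η 3) := by
    rw [q0, q1, q2, q3, gaussSum, mul_sub, mul_sum, mul_sum, ← sum_sub_distrib, ← sum_sub_distrib,
      ← sum_add_distrib]
    refine sum_congr rfl fun a _ => ?_
    rcases hcases a with ⟨_, h⟩ | ⟨_, h | h | h | h⟩ <;> rw [h] <;> simp [*]
  have g3 : gaussSum χ⁻¹ ψ = (η 0 - η 2) - I * (η 1 - η 3) := by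
    rw [q0, q1, q2, q3, gaussSum, mul_sub, mul_sum, mul_sum, ← sum_sub_distrib, ← sum_sub_distrib,
      ← sum_sub_distrib]
    refine sum_congr rfl fun a _ => ?_
    rw [MulChar.inv_apply_eq_inv']
    rcases hcases a with ⟨_, h⟩ | ⟨_, h | h | h | h⟩ <;> rw [h] <;> simp [*]
  have g2 : gaussSum (χ * χ) ψ = η 0 + η 2 - η 1 - η 3 := by
    rw [q0, q1, q2, q3, gaussSum, ← sum_add_distrib, ← sum_sub_distrib, ← sum_sub_distrib]
    refine sum_congr rfl fun a _ => ?_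
    rw [MulChar.mul_apply]
    rcases hcases a with ⟨_, h⟩ | ⟨_, h | h | h | h⟩ <;> rw [h] <;> simp [*]
  have hinv2 : χ⁻¹ * χ⁻¹ = χ * χ := by
    ext a
    rw [MulChar.mul_apply, MulChar.mul_apply, MulChar.inv_apply_eq_inv']
    rcases hcases a with ⟨_, h⟩ | ⟨_, h | h | h | h⟩ <;> rw [h] <;> simp
  have hsum : η 0 + η 1 + η 2 + η 3 = -1 := by
    have h1 : (∑ a, if a = 0 then ψ a else 0) + (η 0 + η 1 + η 2 + η 3) = ∑ a, ψ a := by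
      rw [q0, q1, q2, q3]
      simp only [← sum_add_distrib]
      refine sum_congr rfl fun a _ => ?_
      rcases hcases a with ⟨h0, h⟩ | ⟨h0, h | h | h | h⟩ <;> rw [h] <;> simp [*]
    have hψ1 : ψ ≠ 1 := by
      have := hψ (one_ne_zero)
      rwa [AddChar.mulShift_one] at this
    rw [AddChar.sum_eq_zero_of_ne_one hψ1] at h1
    simp at h1
    linear_combination h1
  have hθu : IsUnit (θ : ZMod p) := by
    rw [isUnit_iff_ne_zero]
    intro h
    rw [h, χ.map_zero] at hχ
    exact n0 hχ
  have hne : χ ≠ 1 := by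
    intro h
    rw [h, MulChar.one_apply hθu] at hχ
    exact n1 hχ
  have hne2 : χ * χ ≠ 1 := by
    intro h
    have h2 : (χ * χ) (θ : ZMod p) = 1 := by rw [h, MulChar.one_apply hθu]
    rw [MulChar.mul_apply, hχ, I_mul_I] at h2
    exact n5 h2
  have hm1 : χ (-1) = -1 := by
    rw [← hord, map_pow, hχ, Complex.I_pow_eq_pow_mod]
    have : (p - 1) / 2 % 4 = 2 := by omega
    rw [this, I_sq]
  have hc1 : gaussSum χ ψ * gaussSum χ⁻¹ ψ = -p := by
    have h := gaussSum_mul_gaussSum_eq_card hne hψ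
    have h2 := mul_gaussSum_inv_eq_gaussSum χ⁻¹ ψ
    rw [MulChar.inv_apply_eq_inv', hm1] at h2
    rw [ZMod.card] at h
    rw [← h2, ← h]
    norm_num
  have hc2 : gaussSum (χ * χ) ψ * gaussSum (χ * χ) ψ = p := by
    have h := gaussSum_mul_gaussSum_eq_card hne2 hψ
    have h2 := mul_gaussSum_inv_eq_gaussSum (χ * χ) ψ
    rw [MulChar.mul_apply, hm1] at h2
    rw [mul_inv, hinv2, ZMod.card] at h
    norm_num at h2
    rw [h2] at h
    exact h
  obtain ⟨J, hJ⟩ : ∃ J : GaussianInt, GaussianInt.toComplex J = jacobiSum χ χ := by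
    have : jacobiSum χ χ ∈ GaussianInt.toComplex.range := by
      have hv : ∀ a, χ a ∈ GaussianInt.toComplex.range := by
        intro a
        have hIm : I ∈ GaussianInt.toComplex.range := ⟨⟨0, 1⟩, by simp [GaussianInt.toComplex_def]⟩
        rcases hcases a with ⟨_, h⟩ | ⟨_, h | h | h | h⟩ <;> rw [h]
        · exact zero_mem _
        · exact one_mem _
        · exact hIm
        · exact neg_mem (one_mem _)
        · exact neg_mem hIm
      exact sum_mem fun a _ => mul_mem (hv _) (hv _)
    exact this
  have hJc : jacobiSum χ⁻¹ χ⁻¹ = (starRingEnd ℂ) (jacobiSum χ χ) := by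
    rw [jacobiSum, jacobiSum, map_sum]
    refine sum_congr rfl fun a _ => ?_
    rw [map_mul, ← MulChar.star_eq_inv, MulChar.star_apply, MulChar.star_apply]
    rfl
  have j1 := jacobiSum_mul_nontrivial hne2 ψ
  have j2 := jacobiSum_mul_nontrivial (χ := χ⁻¹) (φ := χ⁻¹) (by rw [hinv2]; exact hne2) ψ
  rw [hinv2, hJc, ← hJ] at j2
  rw [← hJ] at j1
  rw [GaussianInt.toComplex_def] at j1 j2
  simp only [map_add, map_mul, conj_I, map_intCast] at j2
  rw [g1, g2] at j1
  rw [g3, g2] at j2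
  rw [g1, g3] at hc1
  rw [g2] at hc2
  have hp0 : (p : ℂ) ≠ 0 := by exact_mod_cast hp.ne_zero
  refine ⟨J.im, ?_, hsum, ?_, ?_, ?_⟩
  · have hn : ((J.re : ℂ) ^ 2 + (J.im : ℂ) ^ 2) = p := by
      apply mul_left_cancel₀ hp0
      generalize η 0 + η 2 - η 1 - η 3 = R at *
      generalize η 0 - η 2 = C at *
      generalize η 1 - η 3 = D at *
      have hI := I_sq
      have e : R * (J.re + J.im * I) * (R * (J.re + J.im * -I)) = ((C + I * D) * (C - I * D)) ^ 2 := by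
        rw [j1, j2]; ring
      rw [hc1] at e
      linear_combination e - (J.re ^ 2 + J.im ^ 2 : ℂ) * hc2 + (R ^ 2 * J.im ^ 2) * hI
    have hn' : J.re ^ 2 + J.im ^ 2 = (p : ℤ) := by exact_mod_cast hn
    nlinarith [sq_nonneg J.re]
  · linear_combination hc1 + (η 1 - η 3) ^ 2 * I_sq
  · have h2 : I * 2 ≠ 0 := mul_ne_zero I_ne_zero (by norm_num)
    apply mul_left_cancel₀ h2
    linear_combination j2 - j1
  · linear_combination hc2

lemma aux_mem (p : ℕ) (hp : p.Prime) (hp8 : p % 8 = 5) (θ : ℕ)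
    (hgen : ∀ a : ZMod p, a ≠ 0 → ∃ n < p - 1, (θ : ZMod p) ^ n = a)
    (χ : MulChar (ZMod p) ℂ) (hχ : χ (θ : ZMod p) = Complex.I) (t : ℕ) (ht : t < p) (i : ℕ)
    (hi : i < 4) : t ∈ cycD p θ i ↔ χ (t : ZMod p) = Complex.I ^ i := by
  have := Fact.mk hp
  constructor
  · intro h
    simp only [cycD, mem_image, mem_range] at h
    obtain ⟨j, _, rfl⟩ := h
    rw [ZMod.natCast_mod, Nat.cast_pow, map_pow, hχ, pow_add, pow_mul]
    simp
  · intro h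
    have ht0 : (t : ZMod p) ≠ 0 := by
      intro h0
      rw [h0, χ.map_zero] at h
      exact pow_ne_zero i Complex.I_ne_zero h.symm
    obtain ⟨n, hn, hn'⟩ := hgen _ ht0
    rw [← hn', map_pow, hχ, Complex.I_pow_eq_pow_mod] at h
    have hmod : n % 4 = i := by
      have h4 : n % 4 < 4 := Nat.mod_lt _ (by norm_num)
      have I3 : Complex.I ^ 3 = -Complex.I := by rw [pow_succ, Complex.I_sq]; ring
      generalize n % 4 = k at h h4 ⊢
      have hre := congrArg Complex.re h
      have him := congrArg Complex.im h
      interval_cases k <;> interval_cases i <;> first | rfl | (norm_num [I3] at hre; done) | (norm_num [I3] at him; done)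
    simp only [cycD, mem_image, mem_range]
    refine ⟨n / 4, by omega, ?_⟩
    have e : i + 4 * (n / 4) = n := by omega
    rw [e]
    have h2 : ((θ ^ n : ℕ) : ZMod p) = t := by push_cast; exact hn'
    rw [ZMod.natCast_eq_natCast_iff'] at h2
    rw [h2, Nat.mod_eq_of_lt ht]

open Polynomial in
noncomputable def auxE (p θ i : ℕ) : ℤ[X] := ∑ t ∈ range p, if t ∈ cycD p θ i then X ^ t else 0

lemma aux_sum (p : ℕ) [NeZero p] (f : ZMod p → ℂ) :
    ∑ t ∈ range p, f (t : ZMod p) = ∑ a, f a := by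
  refine sum_nbij' (fun t => (t : ZMod p)) (fun a => a.val) ?_ ?_ ?_ ?_ ?_
  · simp
  · intro a _; simpa using ZMod.val_lt a
  · intro t ht; exact ZMod.val_cast_of_lt (by simpa using ht)
  · intro a _; simp
  · simp

open Polynomial in
lemma aux_dvd (p : ℕ) (hp : p.Prime) (hp8 : p % 8 = 5) (θ : ℕ)
    (hθ : IsPrimitiveRoot (θ : ZMod p) (p - 1)) :
    ∃ b : ℤ, b ^ 2 ≤ p ∧ ∃ V : ℤ, (cyclotomic p ℤ).eval 4 ∣
      (3 + (auxE p θ 1).eval 4 + 2 * (auxE p θ 2).eval 4 + 3 * (auxE p θ 3).eval 4) * V -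
        ((9 + 5 * (p : ℤ)) ^ 2 - p * (6 + 4 * b) ^ 2) := by
  have := Fact.mk hp
  obtain ⟨hgen, χ, hχ⟩ := aux_char p hp hp8 θ hθ
  have hord : (θ : ZMod p) ^ ((p - 1) / 2) = -1 := by
    have h2 : IsPrimitiveRoot ((θ : ZMod p) ^ ((p - 1) / 2)) 2 :=
      hθ.pow (by omega) (by omega)
    exact h2.eq_neg_one_of_two_right
  have hprim := ZMod.isPrimitive_stdAddChar p
  set ψ : AddChar (ZMod p) ℂ := ZMod.stdAddChar with hψ
  set ζ : ℂ := ψ 1 with hζ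
  have hpow : ∀ t : ℕ, ψ (t : ZMod p) = ζ ^ t := by
    intro t
    rw [hζ, ← AddChar.map_nsmul_eq_pow]
    simp
  have hζp : IsPrimitiveRoot ζ p := by
    rw [IsPrimitiveRoot.iff_orderOf]
    refine orderOf_eq_prime ?_ ?_
    · rw [← hpow]; simp
    · intro h
      rw [hζ, AddChar.IsPrimitive.zmod_char_eq_one_iff p hprim] at h
      exact one_ne_zero h
  obtain ⟨b, hb, h1, h2, h3, h4⟩ := aux_gauss p hp hp8 θ hgen hord χ hχ ψ hprim
    (fun i => ∑ a, if χ a = Complex.I ^ i then ψ a else 0) (fun _ => rfl)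
  have hE : ∀ i < 4, aeval ζ (auxE p θ i) = ∑ a, if χ a = Complex.I ^ i then ψ a else 0 := by
    intro i hi
    rw [← aux_sum p (fun a => if χ a = Complex.I ^ i then ψ a else 0), auxE, map_sum]
    refine sum_congr rfl fun t ht => ?_
    simp only [aux_mem p hp hp8 θ hgen χ hχ t (by simpa using ht) i hi]
    split_ifs <;> simp [hpow]
  simp only [← hE 0 (by norm_num), ← hE 1 (by norm_num), ← hE 2 (by norm_num),
    ← hE 3 (by norm_num)] at h1 h2 h3 h4
  refine ⟨b, hb, ?_⟩
  let U : ℤ[X] := 3 + auxE p θ 1 + 2 * auxE p θ 2 + 3 * auxE p θ 3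
  let V : ℤ[X] := 4 * (2 + auxE p θ 1 + auxE p θ 3 + (auxE p θ 0 - auxE p θ 2) +
      (auxE p θ 1 - auxE p θ 3)) *
    (C (9 + 5 * (p : ℤ)) + C (6 + 4 * b) * (auxE p θ 0 + auxE p θ 2 - auxE p θ 1 - auxE p θ 3))
  let P : ℤ[X] := U * V - C ((9 + 5 * (p : ℤ)) ^ 2 - p * (6 + 4 * b) ^ 2)
  have hP : aeval ζ P = 0 := by
    simp only [P, U, V, map_sub, map_mul, map_add, map_pow, map_ofNat, map_natCast,
      eq_intCast, map_intCast]
    generalize aeval ζ (auxE p θ 0) = a at *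
    generalize aeval ζ (auxE p θ 1) = c at *
    generalize aeval ζ (auxE p θ 2) = d at *
    generalize aeval ζ (auxE p θ 3) = e at *
    have ha : a = -1 - c - d - e := by linear_combination h1
    have k1 : 4 * (3 + c + 2 * d + 3 * e) * (2 + c + e + (a - d) + (c - e)) =
        (9 + 5 * p) - (6 + 4 * b) * (a + d - c - e) := by
      have k0 : (3 + c + 2 * d + 3 * e) * (2 + c + e + (a - d) + (c - e)) =
        (2 + (c + e)) ^ 2 - (((a - d) ^ 2 + (c - e) ^ 2) + 2 * (a - d) * (c - e)) := by
        rw [ha]; ring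
      rw [mul_assoc, k0, h2, h3]
      have hB : 2 * (2 + (c + e)) = 3 - (a + d - c - e) := by rw [ha]; ring
      linear_combination (2 * (2 + (c + e)) + (3 - (a + d - c - e))) * hB + h4
    linear_combination ((9 + 5 * p) + (6 + 4 * b) * (a + d - c - e)) * k1 - (6 + 4 * b : ℂ) ^ 2 * h4
  refine ⟨V.eval 4, ?_⟩
  have hdvd : cyclotomic p ℤ ∣ P := by
    rw [cyclotomic_eq_minpoly hζp hp.pos]
    exact minpoly.isIntegrallyClosed_dvd (hζp.isIntegral hp.pos) hP
  have := eval_dvd (x := (4 : ℤ)) hdvd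
  have e : P.eval 4 = (3 + (auxE p θ 1).eval 4 + 2 * (auxE p θ 2).eval 4 + 3 * (auxE p θ 3).eval 4) * V.eval 4 -
        ((9 + 5 * (p : ℤ)) ^ 2 - p * (6 + 4 * b) ^ 2) := by
    simp only [P, U, eval_sub, eval_mul, eval_add, eval_ofNat, eval_C]
  rwa [e] at this

open Polynomial in
lemma aux_val (p : ℕ) (hp : p.Prime) (hp8 : p % 8 = 5) (θ : ℕ)
    (hθ : IsPrimitiveRoot (θ : ZMod p) (p - 1)) :
    ((seqVal p (graySeq (seqCompl (seqS1 p θ)) (seqS3 p θ)) : ℕ) : ℤ) =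
      3 + (auxE p θ 1).eval 4 + 2 * (auxE p θ 2).eval 4 + 3 * (auxE p θ 3).eval 4 := by
  have := Fact.mk hp
  obtain ⟨hgen, χ, hχ⟩ := aux_char p hp hp8 θ hθ
  have hmem := fun t ht => aux_mem p hp hp8 θ hgen χ hχ t ht
  have h3 : (3 : ℤ) = ∑ t ∈ range p, if t = 0 then 3 * 4 ^ t else 0 := by
    rw [sum_ite_eq' (range p) 0]
    simp [hp.pos]
  rw [h3]
  simp only [auxE, eval_finsetSum, mul_sum, seqVal, ← sum_add_distrib, Nat.cast_sum]
  rw [← h3]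
  refine sum_congr rfl fun t ht => ?_
  have ht : t < p := by simpa using ht
  have I3 : Complex.I ^ 3 = -Complex.I := by rw [pow_succ, Complex.I_sq]; ring
  have m0 := hmem t ht 0 (by norm_num)
  have m1 := hmem t ht 1 (by norm_num)
  have m2 := hmem t ht 2 (by norm_num)
  have m3 := hmem t ht 3 (by norm_num)
  have hI1 : Complex.I ≠ 1 := by intro h; simpa using congrArg Complex.re h
  have hI2 : Complex.I ≠ -1 := by intro h; simpa using congrArg Complex.re h
  have hI4 : Complex.I ≠ -Complex.I := by
    intro h
    have := congrArg Complex.im h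
    norm_num at this
  have hI5 : (1 : ℂ) ≠ -1 := by norm_num
  have hI6 : -Complex.I ≠ -1 := by intro h; exact hI1 (by linear_combination -h)
  have hI3 : -Complex.I ≠ 1 := by intro h; exact hI2 (by linear_combination -h)
  simp only [pow_zero, pow_one, Complex.I_sq, I3] at m0 m1 m2 m3
  by_cases h0 : t = 0
  · subst h0
    have z : χ ((0 : ℕ) : ZMod p) = 0 := by rw [Nat.cast_zero]; exact χ.map_zero
    rw [z] at m0 m1 m2 m3
    have a0 : 0 ∉ cycD p θ 0 := by rw [m0]; norm_num
    have a1 : 0 ∉ cycD p θ 1 := by rw [m1]; exact Complex.I_ne_zero.symm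
    have a2 : 0 ∉ cycD p θ 2 := by rw [m2]; norm_num
    have a3 : 0 ∉ cycD p θ 3 := by rw [m3]; simp [Complex.I_ne_zero]
    simp [graySeq, seqCompl, seqS1, seqS3, gray, a0, a1, a2, a3]
  · have ht0 : (t : ZMod p) ≠ 0 := by
      intro h
      have := Nat.le_of_dvd (Nat.pos_of_ne_zero h0) ((ZMod.natCast_eq_zero_iff t p).1 h)
      omega
    have hv : χ (t : ZMod p) = 1 ∨ χ (t : ZMod p) = Complex.I ∨ χ (t : ZMod p) = -1 ∨
        χ (t : ZMod p) = -Complex.I := by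
      obtain ⟨n, _, hn⟩ := hgen _ ht0
      rw [← hn, map_pow, hχ, Complex.I_pow_eq_pow_mod]
      have : n % 4 < 4 := Nat.mod_lt _ (by norm_num)
      interval_cases n % 4 <;> simp
    rcases hv with h | h | h | h <;> rw [h] at m0 m1 m2 m3 <;>
      simp [hI1, hI1.symm, hI2, hI2.symm, hI3, hI3.symm, hI4, hI4.symm, hI5, hI5.symm, hI6,
        hI6.symm] at m0 m1 m2 m3 <;>
      simp [graySeq, seqCompl, seqS1, seqS3, gray, m0, m1, m2, m3, h0]

lemma aux_gcd (p : ℕ) (hp : p.Prime) (hp8 : p % 8 = 5) (θ : ℕ)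
    (hθ : IsPrimitiveRoot (θ : ZMod p) (p - 1)) :
    Nat.gcd (4 ^ p - 1) (seqVal p (graySeq (seqCompl (seqS1 p θ)) (seqS3 p θ))) ≤
      3 * (1 + 2 * p) := by
  have := Fact.mk hp
  obtain ⟨b, hb, V, hV⟩ := aux_dvd p hp hp8 θ hθ
  rw [← aux_val p hp hp8 θ hθ] at hV
  set U := seqVal p (graySeq (seqCompl (seqS1 p θ)) (seqS3 p θ))
  have h1 : 1 ≤ 4 ^ p := Nat.one_le_pow _ _ (by norm_num)
  have hc : (Polynomial.cyclotomic p ℤ).eval 4 * 3 = 4 ^ p - 1 := by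
    have := congrArg (Polynomial.eval (4 : ℤ)) (Polynomial.cyclotomic_prime_mul_X_sub_one ℤ p)
    simp only [Polynomial.eval_mul, Polynomial.eval_sub, Polynomial.eval_X, Polynomial.eval_one,
      Polynomial.eval_pow] at this
    rw [← this]; norm_num
  have h1z : (1 : ℤ) ≤ 4 ^ p := by exact_mod_cast h1
  obtain ⟨M, hM⟩ : ∃ M : ℕ, (M : ℤ) = (Polynomial.cyclotomic p ℤ).eval 4 :=
    ⟨_, Int.toNat_of_nonneg (by omega)⟩
  rw [← hM] at hc hV
  have hM3 : M * 3 = 4 ^ p - 1 := by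
    zify [h1]; exact hc
  have hD := aux_nt p hp hp8 M hM3 b hb (Nat.gcd M U) (Nat.gcd_dvd_left _ _) (by
    have d1 : ((Nat.gcd M U : ℕ) : ℤ) ∣ (M : ℤ) := by exact_mod_cast Nat.gcd_dvd_left M U
    have d2 : ((Nat.gcd M U : ℕ) : ℤ) ∣ (U : ℤ) := by exact_mod_cast Nat.gcd_dvd_right M U
    have d3 := d1.trans hV
    exact (dvd_sub_right (d2.mul_right V)).1 d3)
  rw [← hM3]
  have hM0 : 0 < M := by
    rcases Nat.eq_zero_or_pos M with h | h
    · have : 4 ^ 1 ≤ 4 ^ p := Nat.pow_le_pow_right (by norm_num) hp.pos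
      omega
    · exact h
  have hdv : Nat.gcd (M * 3) U ∣ Nat.gcd M U * 3 := by
    rw [Nat.gcd_comm M U, Nat.gcd_comm _ U]
    exact (Nat.gcd_mul_right_dvd_mul_gcd U M 3).trans (Nat.mul_dvd_mul_left _ (Nat.gcd_dvd_right _ _))
  have hpos : 0 < Nat.gcd M U := Nat.gcd_pos_of_pos_left _ hM0
  have := Nat.le_of_dvd (by omega) hdv
  omega

theorem theorem5
    (p : ℕ) (hp : p.Prime) (hp8 : p % 8 = 5)
    (x y : ℤ) (hx : x % 4 = 1) (hxy : (p : ℤ) = x ^ 2 + 4 * y ^ 2)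
    (θ : ℕ) (hθ : IsPrimitiveRoot (θ : ZMod p) (p - 1))
    (hy : 16 * (((cycD p θ 0).filter (fun a => (a + 1) % p ∈ cycD p θ 1)).card : ℤ)
        = (p : ℤ) + 1 + 2 * x - 8 * y)
    :
    ⌊Real.logb 4 (((4 ^ p - 1 : ℕ) : ℝ) / ((3 * (1 + 2 * (p : ℝ)))) + 1)⌋ ≤
      adicComplexity4 p (graySeq (seqCompl (seqS1 p θ)) (seqS3 p θ)) := by
  unfold adicComplexity4
  have hg := aux_gcd p hp hp8 θ hθ
  have h4 : 4 ^ 1 ≤ 4 ^ p := Nat.pow_le_pow_right (by norm_num) hp.pos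
  have hpos : 0 < Nat.gcd (4 ^ p - 1) (seqVal p (graySeq (seqCompl (seqS1 p θ)) (seqS3 p θ))) :=
    Nat.gcd_pos_of_pos_left _ (by omega)
  have hgR : ((Nat.gcd (4 ^ p - 1) (seqVal p (graySeq (seqCompl (seqS1 p θ)) (seqS3 p θ))) : ℕ) : ℝ)
      ≤ 3 * (1 + 2 * (p : ℝ)) := by exact_mod_cast hg
  have hposR : (0 : ℝ) < ((Nat.gcd (4 ^ p - 1)
      (seqVal p (graySeq (seqCompl (seqS1 p θ)) (seqS3 p θ))) : ℕ) : ℝ) := by exact_mod_cast hpos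
  apply Int.floor_le_floor
  apply Real.logb_le_logb_of_le (by norm_num) (by positivity)
  gcongr
end

section
/- Theorem 6: For the quaternary sequences u₂ = φ[s₁, s₃], u₄ = φ[s₃, s₄], u₁₂ = φ[s₃+1, s₄] of period p, the 4-adic complexity satisfies Φ₄(u_i) ≥ ⌊log₄((4^p − 1)/(3(1+2p)) + 1)⌋ for i = 2, 4, 12. -/
open Finset

lemma nt_prime_factor (p : ℕ) (hp : p.Prime) (hp8 : p % 8 = 5) (M q : ℕ) (hM : 3 * M = 4 ^ p - 1)
    (hq : q.Prime) (hqM : q ∣ M) : q ≡ 1 [MOD 2 * p] := by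
  have := Fact.mk hq
  have := Fact.mk hp
  have h4 : (1:ℕ) ≤ 4 ^ p := Nat.one_le_pow _ _ (by norm_num)
  have hqd : q ∣ 4 ^ p - 1 := hM ▸ Dvd.dvd.mul_left hqM 3
  have e1 : ((4 : ZMod q)) ^ p = 1 := by
    have := (ZMod.natCast_eq_zero_iff (4 ^ p - 1) q).2 hqd
    rw [Nat.cast_sub h4] at this
    push_cast at this
    exact sub_eq_zero.1 this
  have hq2 : q ≠ 2 := by
    rintro rfl
    have h2 : 2 ∣ 4 ^ p := dvd_pow (by norm_num) hp.ne_zero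
    omega
  have hq3 : q ≠ 3 := by
    rintro rfl
    have h9 : 4 ^ p ≡ 1 + 3 * p [MOD 9] := by
      have : ∀ n : ℕ, 4 ^ n ≡ 1 + 3 * n [MOD 9] := by
        intro n
        induction n with
        | zero => rfl
        | succ n ih =>
          unfold Nat.ModEq at *
          rw [pow_succ]; omega
      exact this p
    have hp3 : p % 3 = 0 := by
      unfold Nat.ModEq at h9; omega
    have := (Nat.prime_dvd_prime_iff_eq Nat.prime_three hp).1 (Nat.dvd_of_mod_eq_zero hp3)
    omega
  have h41 : (4 : ZMod q) ≠ 1 := by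
    intro h
    have : ((3:ℕ) : ZMod q) = 0 := by
      push_cast; linear_combination h
    rw [ZMod.natCast_eq_zero_iff] at this
    exact hq3 ((Nat.prime_dvd_prime_iff_eq hq Nat.prime_three).1 this)
  have ho : orderOf (4 : ZMod q) = p := orderOf_eq_prime e1 h41
  have h40 : (4 : ZMod q) ≠ 0 := by
    intro h; rw [h, zero_pow hp.ne_zero] at e1; exact zero_ne_one e1
  have hd : p ∣ q - 1 := by
    rw [← ho]; exact orderOf_dvd_of_pow_eq_one (ZMod.pow_card_sub_one_eq_one h40)
  have hqo : 2 ∣ q - 1 := by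
    have := hq.eq_two_or_odd
    omega
  have hc : Nat.Coprime 2 p := by
    rw [Nat.coprime_two_left]; exact Nat.odd_iff.2 (by omega)
  exact ((Nat.modEq_iff_dvd' hq.one_le).2 (hc.mul_dvd_of_dvd_of_dvd hqo hd)).symm

lemma nt_div (p : ℕ) (hp : p.Prime) (hp8 : p % 8 = 5) (M : ℕ) (hM : 3 * M = 4 ^ p - 1)
    (d : ℕ) (hd0 : d ≠ 0) (hdM : d ∣ M) : d ≡ 1 [MOD 2 * p] := by
  induction d using Nat.recOnMul with
  | zero => exact absurd rfl hd0
  | one => rfl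
  | prime q hq => exact nt_prime_factor p hp hp8 M q hM hq hdM
  | mul a b ha hb =>
    have h1 := ha (by rintro rfl; simp at hd0) (dvd_of_mul_right_dvd hdM)
    have h2 := hb (by rintro rfl; simp at hd0) (dvd_of_mul_left_dvd hdM)
    simpa using h1.mul h2

lemma nt_ge (p : ℕ) (d : ℕ) (hd0 : d ≠ 0) (h : d ≡ 1 [MOD 2 * p]) : ∃ m, d = 1 + 2 * p * m := by
  obtain ⟨m, hm⟩ := (Nat.modEq_iff_dvd' (Nat.one_le_iff_ne_zero.2 hd0)).1 h.symm
  exact ⟨m, by omega⟩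

lemma nt_m2 (p : ℕ) (hp : p.Prime) (hp8 : p % 8 = 5) (M : ℕ) (hM : 3 * M = 4 ^ p - 1)
    (hdM : 1 + 4 * p ∣ M) : False := by
  have hpr : (1 + 4 * p).Prime := by
    by_contra hn
    have hsq := Nat.minFac_sq_le_self (by omega : 0 < 1 + 4 * p) hn
    have hq := Nat.minFac_prime (show 1 + 4 * p ≠ 1 by have := hp.pos; omega)
    have hmod := nt_prime_factor p hp hp8 M _ hM hq ((Nat.minFac_dvd _).trans hdM)
    obtain ⟨m, hm⟩ := nt_ge p _ hq.ne_zero hmod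
    have hm1 : 1 ≤ m := by
      rcases Nat.eq_zero_or_pos m with h | h
      · subst h; rw [mul_zero] at hm; exact absurd hm hq.one_lt.ne'
      · exact h
    have : 1 + 2 * p ≤ (1 + 4 * p).minFac := by rw [hm]; nlinarith
    nlinarith [hp.pos]
  have := Fact.mk hpr
  have h4 : (1:ℕ) ≤ 4 ^ p := Nat.one_le_pow _ _ (by norm_num)
  have hqd : 1 + 4 * p ∣ 4 ^ p - 1 := hM ▸ Dvd.dvd.mul_left hdM 3
  have e1 : ((4 : ZMod (1 + 4 * p))) ^ p = 1 := by
    have := (ZMod.natCast_eq_zero_iff (4 ^ p - 1) (1 + 4 * p)).2 hqd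
    rw [Nat.cast_sub h4] at this
    push_cast at this
    exact sub_eq_zero.1 this
  have h2 : (2 : ZMod (1 + 4 * p)) ≠ 0 := by
    intro h
    have : ((2:ℕ) : ZMod (1 + 4 * p)) = 0 := by exact_mod_cast h
    rw [ZMod.natCast_eq_zero_iff] at this
    have := Nat.le_of_dvd (by norm_num) this
    have := hp.pos
    omega
  have hsq : IsSquare (2 : ZMod (1 + 4 * p)) := by
    rw [ZMod.euler_criterion _ h2]
    have : (1 + 4 * p) / 2 = 2 * p := by omega
    rw [this, pow_mul]; norm_num; exact e1
  rw [ZMod.exists_sq_eq_two_iff (by have := hp.pos; omega)] at hsq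
  omega

set_option maxHeartbeats 1000000 in
lemma nt_main (p : ℕ) (hp : p.Prime) (hp8 : p % 8 = 5) (M : ℕ) (hM : 3 * M = 4 ^ p - 1)
    (x y : ℤ) (hxy : (p : ℤ) = x ^ 2 + 4 * y ^ 2)
    (d : ℕ) (hdM : d ∣ M) (hdN : (d : ℤ) ∣ (9 + 5 * p) ^ 2 - p * (6 + 8 * y) ^ 2) :
    d ≤ 1 + 2 * p := by
  by_cases hsmall : p < 29
  · have hp' : p = 5 ∨ p = 13 := by
      interval_cases p <;> simp_all +decide
    have hyb : -1 ≤ y ∧ y ≤ 1 := by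
      have : (p : ℤ) ≤ 13 := by rcases hp' with h | h <;> simp [h]
      constructor <;> nlinarith [sq_nonneg x]
    obtain ⟨h1, h2⟩ := hyb
    have hg : (d : ℤ) ∣ Int.gcd M ((9 + 5 * p) ^ 2 - p * (6 + 8 * y) ^ 2) :=
      Int.dvd_coe_gcd (by exact_mod_cast hdM) hdN
    have key : Int.gcd M ((9 + 5 * p) ^ 2 - p * (6 + 8 * y) ^ 2) ≤ 1 + 2 * p ∧
        0 < Int.gcd M ((9 + 5 * p) ^ 2 - p * (6 + 8 * y) ^ 2) := by
      rcases hp' with rfl | rfl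
      · obtain rfl : M = 341 := by norm_num at hM; omega
        interval_cases y <;> norm_num
      · obtain rfl : M = 22369621 := by norm_num at hM; omega
        interval_cases y <;> norm_num
    exact (Nat.le_of_dvd key.2 (by exact_mod_cast hg)).trans key.1
  · push Not at hsmall
    have hM0 : M ≠ 0 := by
      rintro rfl
      have : 4 ^ 1 ≤ 4 ^ p := Nat.pow_le_pow_right (by norm_num) hp.one_le
      omega
    have hd0 : d ≠ 0 := by rintro rfl; exact hM0 (zero_dvd_iff.1 hdM)
    obtain ⟨m, hm⟩ := nt_ge p d hd0 (nt_div p hp hp8 M hM d hd0 hdM)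
    by_contra hlt
    have hm2 : 2 ≤ m := by
      by_contra h
      have : m = 0 ∨ m = 1 := by omega
      rcases this with rfl | rfl <;> omega
    obtain ⟨e, he⟩ := hdN
    have hdz : (d : ℤ) = 1 + 2 * p * m := by exact_mod_cast hm
    have hP : (29 : ℤ) ≤ p := by exact_mod_cast hsmall
    have hmz : (2 : ℤ) ≤ m := by exact_mod_cast hm2
    have hp8z : (p : ℤ) % 8 = 5 := by omega
    have hk : (p : ℤ) ∣ e - 81 := by
      refine ⟨25 * p + 90 - (6 + 8 * y) ^ 2 - 2 * m * e, ?_⟩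
      rw [hdz] at he
      linear_combination -he
    obtain ⟨k, hk⟩ := hk
    have he' : e = 81 + p * k := by linarith
    have hpos : 0 < e := by
      have hN : 0 < ((9 : ℤ) + 5 * p) ^ 2 - p * (6 + 8 * y) ^ 2 := by
        have h1 : 0 < 9 * (p : ℤ) + 54 - 96 * y := by
          rcases le_or_gt y 2 with h | h
          · linarith
          · nlinarith [sq_nonneg x]
        have h2 : (6 + 8 * y) ^ 2 ≤ 16 * (p:ℤ) + 96 * y + 36 := by nlinarith [sq_nonneg x]
        have h3 : (6 + 8 * y) ^ 2 < 25 * (p:ℤ) + 90 := by linarith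
        nlinarith
      rw [he] at hN
      exact (mul_pos_iff_of_pos_left (by omega : (0:ℤ) < d)).1 hN
    have hE : k + 162 * m + 2 * p * m * k = 25 * p + 90 - (6 + 8 * y) ^ 2 := by
      have hp0 : (p : ℤ) ≠ 0 := by linarith
      apply mul_left_cancel₀ hp0
      rw [hdz, he'] at he
      linear_combination -he
    have hk8 : k % 8 = 3 := by
      obtain ⟨c, hc⟩ : ∃ c : ℤ, (p:ℤ) = 8 * c + 5 := ⟨p / 8, by omega⟩
      have h8 : (k + 2 * m + 2 * (m * k) - 3) % 8 = 0 := by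
        apply Int.emod_eq_zero_of_dvd
        refine ⟨25 * c + 26 - 4 - 12 * y - 8 * y ^ 2 - 20 * m - 2 * c * m * k - m * k, ?_⟩
        rw [hc] at hE
        linear_combination hE
      have hkm : k % 8 = 0 ∨ k % 8 = 1 ∨ k % 8 = 2 ∨ k % 8 = 3 ∨ k % 8 = 4 ∨ k % 8 = 5 ∨ k % 8 = 6 ∨ k % 8 = 7 := by omega
      obtain ⟨r, hr⟩ : ∃ r : ℤ, k = 8 * r + k % 8 := ⟨k / 8, by omega⟩
      obtain ⟨s, hs⟩ : ∃ s : ℤ, s = m * r := ⟨_, rfl⟩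
      rcases hkm with h | h | h | h | h | h | h | h <;> rw [h] at hr <;> 
        (have : (m:ℤ) * k = 8 * s + m * (k % 8) := by rw [hs, h, hr]; ring) <;> rw [h] at this <;> omega
    have hk3 : 3 ≤ k := by
      by_contra h
      have : k ≤ -5 := by omega
      nlinarith
    have hkk : k = 3 := by
      by_contra h
      have h11 : 11 ≤ k := by omega
      have : 2 * 11 ≤ (m : ℤ) * k := by nlinarith
      nlinarith [sq_nonneg (6 + 8 * y)]
    subst hkk
    have hm4 : m ≤ 4 := by
      by_contra h
      have : (5 : ℤ) ≤ m := by omega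
      nlinarith [sq_nonneg (6 + 8 * y)]
    interval_cases m
    · exact nt_m2 p hp hp8 M hM (by convert hdM using 1; omega)
    · have hsq : (6 + 8 * y) ^ 2 = 7 * (p - 57 : ℤ) := by push_cast at hE; linarith
      have h7 : (7 : ℤ) ∣ 6 + 8 * y := Int.Prime.dvd_pow' (k := 2) (by norm_num) ⟨_, hsq⟩
      obtain ⟨c, hc⟩ := h7
      have hp7 : (p : ℤ) = 57 + 7 * c ^ 2 := by
        rw [hc] at hsq; linarith
      have h7d : (7 : ℤ) ∣ d := ⟨49 + 6 * c ^ 2, by rw [hdz, hp7]; push_cast; ring⟩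
      have h7d' : 7 ∣ d := by exact_mod_cast h7d
      have := nt_prime_factor p hp hp8 M 7 hM (by norm_num) (h7d'.trans hdM)
      obtain ⟨n, hn⟩ := nt_ge p 7 (by norm_num) this
      have : n = 0 ∨ 1 ≤ n := by omega
      rcases this with rfl | h
      · omega
      · have : 2 * p * 1 ≤ 2 * p * n := Nat.mul_le_mul_left _ h
        omega
    · have hsq : (6 + 8 * y) ^ 2 = (p - 561 : ℤ) := by push_cast at hE; linarith
      have hx3 : (3 : ℤ) ∣ x := by
        apply Int.Prime.dvd_pow' (k := 2) (by norm_num)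
        exact ⟨199 + 32 * y + 20 * y ^ 2, by push_cast; linarith⟩
      obtain ⟨c, hc⟩ := hx3
      subst hc
      have h3 : 3 * c ^ 2 = 20 * y ^ 2 + 32 * y + 199 := by nlinarith
      obtain ⟨r, hr⟩ : ∃ r : ℤ, y = 3 * r + y % 3 := ⟨y / 3, by omega⟩
      have : y % 3 = 0 ∨ y % 3 = 1 ∨ y % 3 = 2 := by omega
      rcases this with h | h | h <;> rw [h] at hr <;> rw [hr] at h3 <;> ring_nf at h3 <;> omega

lemma E_inj (p : ℕ) (θ : ℕ) (hθ : IsPrimitiveRoot (θ : ZMod p) (p - 1)) {n m : ℕ}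
    (hn : n < p - 1) (hm : m < p - 1) (h : θ ^ n % p = θ ^ m % p) : n = m := by
  apply hθ.pow_inj hn hm
  have : ((θ ^ n : ℕ) : ZMod p) = ((θ ^ m : ℕ) : ZMod p) := (ZMod.natCast_eq_natCast_iff' _ _ _).2 h
  exact_mod_cast this

lemma E_pos (p : ℕ) (hp : p.Prime) (θ : ℕ) (hθ : IsPrimitiveRoot (θ : ZMod p) (p - 1)) (n : ℕ) :
    θ ^ n % p ≠ 0 := by
  have := Fact.mk hp
  intro h
  have h0 : ((θ ^ n : ℕ) : ZMod p) = 0 := (ZMod.natCast_eq_zero_iff _ _).2 (Nat.dvd_of_mod_eq_zero h)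
  push_cast at h0
  have h1 := hθ.pow_eq_one
  have h2 : (θ : ZMod p) = 0 := (pow_eq_zero_iff (by rintro rfl; simp at h0)).1 h0
  rw [h2, zero_pow (by have := hp.two_le; omega)] at h1
  exact zero_ne_one h1

lemma mem_cycD (p θ i n : ℕ) (hp8 : p % 8 = 5)
    (hθ : IsPrimitiveRoot (θ : ZMod p) (p - 1)) (hn : n < p - 1) (hi : i < 4) :
    θ ^ n % p ∈ cycD p θ i ↔ n % 4 = i := by
  unfold cycD
  rw [Finset.mem_image]
  constructor
  · rintro ⟨j, hj, h⟩
    rw [Finset.mem_range] at hj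
    have := E_inj p θ hθ (by omega) hn h
    omega
  · intro h
    refine ⟨n / 4, ?_, ?_⟩
    · rw [Finset.mem_range]; omega
    · congr 2; omega

lemma cycD_disj (p θ i j t : ℕ) (hp8 : p % 8 = 5)
    (hθ : IsPrimitiveRoot (θ : ZMod p) (p - 1)) (hi : i < 4) (hj : j < 4) (hij : i ≠ j)
    (ht : t ∈ cycD p θ i) : t ∉ cycD p θ j := by
  have h := ht
  unfold cycD at h
  rw [Finset.mem_image] at h
  obtain ⟨k, hk, rfl⟩ := h
  rw [Finset.mem_range] at hk
  rw [mem_cycD p θ j _ hp8 hθ (by omega) hj]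
  omega

lemma zero_notMem_cycD (p θ i : ℕ) (hp : p.Prime)
    (hθ : IsPrimitiveRoot (θ : ZMod p) (p - 1)) : 0 ∉ cycD p θ i := by
  unfold cycD
  rw [Finset.mem_image]
  rintro ⟨j, _, h⟩
  exact E_pos p hp θ hθ _ h

lemma sum_cycD {R : Type*} [AddCommMonoid R] (p θ i : ℕ) (hp8 : p % 8 = 5)
    (hθ : IsPrimitiveRoot (θ : ZMod p) (p - 1)) (hi : i < 4) (H : ℕ → R) :
    ∑ t ∈ cycD p θ i, H t = ∑ j ∈ range ((p - 1) / 4), H (θ ^ (i + 4 * j) % p) := by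
  unfold cycD
  rw [Finset.sum_image]
  intro a ha b hb h
  simp only [Finset.coe_range, Set.mem_Iio] at ha hb
  have := E_inj p θ hθ (by omega) (by omega) h
  omega

lemma sum_range_four {R : Type*} [AddCommMonoid R] (k : ℕ) (F : ℕ → R) :
    ∑ n ∈ range (4 * k), F n = ∑ j ∈ range k, F (0 + 4 * j) + ∑ j ∈ range k, F (1 + 4 * j)
      + ∑ j ∈ range k, F (2 + 4 * j) + ∑ j ∈ range k, F (3 + 4 * j) := by
  induction k with
  | zero => simp
  | succ k ih =>
    rw [show 4 * (k + 1) = 4 * k + 1 + 1 + 1 + 1 by ring]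
    simp only [Finset.sum_range_succ, ih]
    rw [show 0 + 4 * k = 4 * k by ring, show 1 + 4 * k = 4 * k + 1 by ring,
      show 2 + 4 * k = 4 * k + 1 + 1 by ring, show 3 + 4 * k = 4 * k + 1 + 1 + 1 by ring]
    abel

lemma sum_range_cyc {R : Type*} [AddCommMonoid R] (p θ : ℕ) (hp : p.Prime) (hp8 : p % 8 = 5)
    (hθ : IsPrimitiveRoot (θ : ZMod p) (p - 1)) (H : ℕ → R) :
    ∑ t ∈ range p, H t = H 0 + (∑ t ∈ cycD p θ 0, H t + ∑ t ∈ cycD p θ 1, H t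
      + ∑ t ∈ cycD p θ 2, H t + ∑ t ∈ cycD p θ 3, H t) := by
  rw [sum_cycD p θ 0 hp8 hθ (by norm_num), sum_cycD p θ 1 hp8 hθ (by norm_num),
    sum_cycD p θ 2 hp8 hθ (by norm_num), sum_cycD p θ 3 hp8 hθ (by norm_num),
    ← sum_range_four ((p - 1) / 4) (fun n => H (θ ^ n % p)),
    ← Finset.add_sum_erase (range p) H (Finset.mem_range.2 hp.pos)]
  congr 1
  have h4 : 4 * ((p - 1) / 4) = p - 1 := by omega
  rw [h4]
  have hinj : Set.InjOn (fun n => θ ^ n % p) (range (p - 1)) := by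
    intro a ha b hb h
    simp only [Finset.coe_range, Set.mem_Iio] at ha hb
    exact E_inj p θ hθ ha hb h
  rw [← Finset.sum_image (f := H) hinj]
  congr 1
  symm
  apply Finset.eq_of_subset_of_card_le
  · intro t ht
    rw [Finset.mem_image] at ht
    obtain ⟨n, _, rfl⟩ := ht
    rw [Finset.mem_erase, Finset.mem_range]
    exact ⟨E_pos p hp θ hθ n, Nat.mod_lt _ hp.pos⟩
  · rw [Finset.card_image_of_injOn hinj, Finset.card_erase_of_mem (Finset.mem_range.2 hp.pos)]
    simp

lemma sum_zmod (p : ℕ) [NeZero p] {R : Type*} [AddCommMonoid R] (F : ZMod p → R) :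
    ∑ t : ZMod p, F t = ∑ t ∈ range p, F (t : ZMod p) := by
  symm
  apply Finset.sum_bij (fun (t : ℕ) _ => (t : ZMod p))
  · intros; simp
  · intro a ha b hb h
    rw [Finset.mem_range] at ha hb
    rw [ZMod.natCast_eq_natCast_iff'] at h
    rwa [Nat.mod_eq_of_lt ha, Nat.mod_eq_of_lt hb] at h
  · intro b _
    exact ⟨b.val, Finset.mem_range.2 (ZMod.val_lt b), by simp⟩
  · intros; rfl

lemma exists_chi (p θ : ℕ) [hp : Fact p.Prime] (hp8 : p % 8 = 5)
    (hθ : IsPrimitiveRoot (θ : ZMod p) (p - 1)) :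
    ∃ χ : MulChar (ZMod p) ℂ, χ (θ : ZMod p) = Complex.I := by
  have hp1 : p - 1 ≠ 0 := by omega
  have hu : IsUnit (θ : ZMod p) := hθ.isUnit hp1
  obtain ⟨g, hg⟩ := hu
  have hgp : IsPrimitiveRoot g (p - 1) := by
    rw [← hg] at hθ; exact IsPrimitiveRoot.coe_units_iff.1 hθ
  have hgen : ∀ x, x ∈ Subgroup.zpowers g := by
    have hc : Nat.card (Subgroup.zpowers g) = Nat.card (ZMod p)ˣ := by
      rw [Nat.card_zpowers, ← hgp.eq_orderOf, Nat.card_eq_fintype_card, ZMod.card_units]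
    have := Subgroup.eq_top_of_card_eq _ hc
    intro x; rw [this]; trivial
  let I' : ℂˣ := Units.mk0 Complex.I Complex.I_ne_zero
  have hI : I' ∈ rootsOfUnity (Fintype.card (ZMod p)ˣ) ℂ := by
    rw [mem_rootsOfUnity, ZMod.card_units]
    ext
    simp only [I', Units.val_pow_eq_pow_val, Units.val_mk0, Units.val_one]
    rw [show p - 1 = 4 * ((p - 1) / 4) by omega, pow_mul, Complex.I_pow_four, one_pow]
  refine ⟨MulChar.ofRootOfUnity hI hgen, ?_⟩
  rw [← hg, MulChar.ofRootOfUnity_spec]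
  rfl

lemma gauss_eval (p θ : ℕ) [hp : Fact p.Prime] (hp8 : p % 8 = 5)
    (hθ : IsPrimitiveRoot (θ : ZMod p) (p - 1)) (χ : MulChar (ZMod p) ℂ) (w : ℂ)
    (hχ : χ (θ : ZMod p) = w) (hw : w ^ 4 = 1) (ζ : ℂ) (hζ : ζ ^ p = 1) :
    gaussSum χ (AddChar.zmodChar p hζ) =
      ∑ t ∈ cycD p θ 0, ζ ^ t + w * ∑ t ∈ cycD p θ 1, ζ ^ t
      + w ^ 2 * ∑ t ∈ cycD p θ 2, ζ ^ t + w ^ 3 * ∑ t ∈ cycD p θ 3, ζ ^ t := by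
  have key : ∀ i < 4, ∑ t ∈ cycD p θ i, χ ((t : ℕ) : ZMod p) * ζ ^ t
      = w ^ i * ∑ t ∈ cycD p θ i, ζ ^ t := by
    intro i hi
    rw [Finset.mul_sum]
    apply Finset.sum_congr rfl
    intro t ht
    congr 1
    unfold cycD at ht
    rw [Finset.mem_image] at ht
    obtain ⟨j, _, rfl⟩ := ht
    rw [ZMod.natCast_mod]
    push_cast
    rw [map_pow, hχ, pow_add, pow_mul, hw, one_pow, mul_one]
  unfold gaussSum
  rw [sum_zmod]
  simp only [AddChar.zmodChar_apply']
  rw [sum_range_cyc p θ hp.out hp8 hθ, key 0 (by norm_num), key 1 (by norm_num),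
    key 2 (by norm_num), key 3 (by norm_num)]
  have h0 : χ ((0 : ℕ) : ZMod p) = 0 := by
    rw [Nat.cast_zero]; exact MulChar.map_nonunit χ not_isUnit_zero
  rw [h0]
  simp

lemma gaussInt_form (z : ℂ) (hz : z ∈ Algebra.adjoin ℤ {Complex.I}) :
    ∃ a b : ℤ, z = a + b * Complex.I := by
  induction hz using Algebra.adjoin_induction with
  | mem x hx => exact ⟨0, 1, by simp at hx; simp [hx]⟩
  | algebraMap r => exact ⟨r, 0, by simp⟩
  | add x y _ _ hx hy =>
    obtain ⟨a, b, rfl⟩ := hx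
    obtain ⟨c, d, rfl⟩ := hy
    exact ⟨a + c, b + d, by push_cast; ring⟩
  | mul x y _ _ hx hy =>
    obtain ⟨a, b, rfl⟩ := hx
    obtain ⟨c, d, rfl⟩ := hy
    exact ⟨a * c - b * d, a * d + b * c, by push_cast; linear_combination (b * d : ℂ) * Complex.I_sq⟩

lemma periods (p θ : ℕ) [hp : Fact p.Prime] (hp8 : p % 8 = 5)
    (hθ : IsPrimitiveRoot (θ : ZMod p) (p - 1)) (ζ : ℂ) (hζ : IsPrimitiveRoot ζ p) :
    ∃ x y : ℤ, (p : ℤ) = x ^ 2 + 4 * y ^ 2 ∧ ∀ e0 e1 e2 e3 : ℂ,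
      e0 = ∑ t ∈ cycD p θ 0, ζ ^ t → e1 = ∑ t ∈ cycD p θ 1, ζ ^ t →
      e2 = ∑ t ∈ cycD p θ 2, ζ ^ t → e3 = ∑ t ∈ cycD p θ 3, ζ ^ t →
      (e0 - e2) ^ 2 + (e1 - e3) ^ 2 = - p ∧ (e0 - e2) * (e1 - e3) = y * (e0 - e1 + e2 - e3) ∧
      (e0 - e1 + e2 - e3) ^ 2 = p := by
  obtain ⟨χ, hχ⟩ := exists_chi p θ hp8 hθ
  have hI4 : Complex.I ^ 4 = 1 := Complex.I_pow_four
  have hθ0 : (θ : ZMod p) ≠ 0 := by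
    intro h
    apply E_pos p hp.out θ hθ 1
    rw [pow_one]
    exact Nat.mod_eq_zero_of_dvd ((ZMod.natCast_eq_zero_iff _ _).1 h)
  have hθu : IsUnit (θ : ZMod p) := hθ0.isUnit
  have hχi : χ⁻¹ (θ : ZMod p) = -Complex.I := by
    rw [← MulChar.star_apply', hχ]; simp
  have hχ2 : (χ * χ) (θ : ZMod p) = -1 := by
    rw [MulChar.mul_apply, hχ, Complex.I_mul_I]
  have hχi2 : (χ⁻¹ * χ⁻¹) (θ : ZMod p) = -1 := by
    rw [MulChar.mul_apply, hχi]; simp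
  have one_θ : (1 : MulChar (ZMod p) ℂ) (θ : ZMod p) = 1 := MulChar.one_apply hθu
  have n1 : χ ≠ 1 := by
    rintro rfl
    rw [one_θ] at hχ
    have := congrArg Complex.re hχ
    simp at this
  have n2 : χ * χ ≠ 1 := by
    intro h
    rw [h, one_θ] at hχ2
    norm_num at hχ2
  have n3 : χ⁻¹ * χ⁻¹ ≠ 1 := by
    intro h
    rw [h, one_θ] at hχi2
    norm_num at hχi2
  have hneg : (-1 : ZMod p) = (θ : ZMod p) ^ ((p - 1) / 2) := by
    have h1 : ((θ : ZMod p) ^ ((p - 1) / 2)) ^ 2 = 1 := by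
      rw [← pow_mul, show (p - 1) / 2 * 2 = p - 1 by omega]; exact hθ.pow_eq_one
    rcases mul_self_eq_one_iff.1 ((sq _).symm.trans h1) with h | h
    · exact absurd h (hθ.pow_ne_one_of_pos_of_lt (by omega) (by omega))
    · exact h.symm
  have hχneg : χ (-1) = -1 := by
    rw [hneg, map_pow, hχ, show (p - 1) / 2 = 4 * (p / 8) + 2 by omega, pow_add, pow_mul, hI4]
    simp
  have hχineg : χ⁻¹ (-1) = -1 := by
    rw [← MulChar.star_apply', hχneg]; simp
  have h4 : χ ^ 4 = 1 := by
    ext a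
    have : NeZero (p - 1) := ⟨by omega⟩
    obtain ⟨n, hn⟩ : ∃ n : ℕ, (θ : ZMod p) ^ n = a := by
      obtain ⟨n, _, hn⟩ := (hθ.eq_pow_of_pow_eq_one (ξ := (a : ZMod p)) (ZMod.pow_card_sub_one_eq_one a.ne_zero))
      exact ⟨n, hn⟩
    rw [MulChar.pow_apply_coe, ← hn, map_pow, hχ, ← pow_mul, mul_comm, pow_mul, hI4, map_pow, one_θ]
  have hprim : IsPrimitiveRoot Complex.I 4 := Complex.isPrimitiveRoot_I
  obtain ⟨z, hz, hJ⟩ := exists_jacobiSum_eq_neg_one_add (n := 4) (by norm_num) h4 h4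
    (by rw [ZMod.card]; omega) hprim
  obtain ⟨a, b, rfl⟩ := gaussInt_form z hz
  have hJ' : jacobiSum χ χ = ((-1 + 2 * b : ℤ) : ℂ) + 2 * ((-a : ℤ) : ℂ) * Complex.I := by
    rw [hJ]; push_cast
    linear_combination (a + b * Complex.I - 2 * b : ℂ) * Complex.I_sq
  have hJi : jacobiSum χ⁻¹ χ⁻¹ = ((-1 + 2 * b : ℤ) : ℂ) - 2 * ((-a : ℤ) : ℂ) * Complex.I := by
    have : jacobiSum χ⁻¹ χ⁻¹ = star (jacobiSum χ χ) := by
      unfold jacobiSum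
      rw [star_sum]
      simp only [star_mul', MulChar.star_apply']
    rw [this, hJ']
    simp
  have hprod := jacobiSum_mul_jacobiSum_inv (F' := ℂ) (F := ZMod p) (by
    rw [ringChar.eq_zero, ZMod.ringChar_zmod_n]; exact hp.out.ne_zero.symm) n1 n1 n2
  refine ⟨-1 + 2 * b, -a, ?_, ?_⟩
  · rw [hJ', hJi, ZMod.card] at hprod
    have : ((p : ℤ) : ℂ) = (((-1 + 2 * b) ^ 2 + 4 * (-a) ^ 2 : ℤ) : ℂ) := by
      push_cast at hprod ⊢
      linear_combination -hprod - 4 * (a:ℂ) ^ 2 * Complex.I_sq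
    exact_mod_cast this
  · intro e0 e1 e2 e3 h0 h1 h2 h3
    set ψ := AddChar.zmodChar p hζ.pow_eq_one with hψ
    have hψp : ψ.IsPrimitive := AddChar.zmodChar_primitive_of_primitive_root p hζ
    have hm1 : (-1 : ℂ) ^ 4 = 1 := by norm_num
    have hmI : (-Complex.I) ^ 4 = 1 := by rw [neg_pow, hI4]; norm_num
    have G1 := gauss_eval p θ hp8 hθ χ _ hχ hI4 ζ hζ.pow_eq_one
    have G2 := gauss_eval p θ hp8 hθ χ⁻¹ _ hχi hmI ζ hζ.pow_eq_one
    have G3 := gauss_eval p θ hp8 hθ (χ * χ) _ hχ2 hm1 ζ hζ.pow_eq_one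
    have G4 := gauss_eval p θ hp8 hθ (χ⁻¹ * χ⁻¹) _ hχi2 hm1 ζ hζ.pow_eq_one
    rw [← hψ, ← h0, ← h1, ← h2, ← h3] at G1 G2 G3 G4
    have I3 : Complex.I ^ 3 = -Complex.I := by rw [pow_succ, Complex.I_sq]; ring
    have G1' : gaussSum χ ψ = (e0 - e2) + Complex.I * (e1 - e3) := by
      rw [G1, I3, Complex.I_sq]; ring
    have G2' : gaussSum χ⁻¹ ψ = (e0 - e2) - Complex.I * (e1 - e3) := by
      rw [G2, neg_pow, neg_pow Complex.I 3, I3, Complex.I_sq]; ring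
    have G3' : gaussSum (χ * χ) ψ = e0 - e1 + e2 - e3 := by rw [G3]; ring
    have G4' : gaussSum (χ⁻¹ * χ⁻¹) ψ = e0 - e1 + e2 - e3 := by rw [G4]; ring
    have r1 := gaussSum_mul_gaussSum_eq_card n1 hψp
    have r1' := mul_gaussSum_inv_eq_gaussSum χ⁻¹ ψ
    have r2 := gaussSum_mul_gaussSum_eq_card n2 hψp
    have r2' := mul_gaussSum_inv_eq_gaussSum (χ⁻¹ * χ⁻¹) ψ
    have s1 := jacobiSum_mul_nontrivial n2 ψ
    have s2 := jacobiSum_mul_nontrivial n3 ψ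
    rw [mul_inv] at r2
    rw [hχineg] at r1'
    rw [MulChar.mul_apply, hχineg] at r2'
    rw [G2'] at r1'
    rw [G4'] at r2'
    rw [ZMod.card, G1'] at r1
    rw [ZMod.card, G3'] at r2
    rw [G3', G1', hJ'] at s1
    rw [G4', G2', hJi] at s2
    refine ⟨?_, ?_, ?_⟩
    · linear_combination -r1 - (e0 - e2 + Complex.I * (e1 - e3)) * r1' - (e1 - e3)^2 * Complex.I_sq * (-1)
    · have h4I : (4 * Complex.I) ≠ 0 := by simp
      apply mul_left_cancel₀ h4I
      linear_combination s2 - s1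
    · linear_combination r2 - (e0 - e1 + e2 - e3) * r2'

open Polynomial in
lemma transfer (p : ℕ) [hp : Fact p.Prime] (ζ : ℂ) (hζ : IsPrimitiveRoot ζ p) (M : ℕ)
    (hM : 3 * M = 4 ^ p - 1) (P : ℤ[X]) (h : aeval ζ P = 0) : (M : ℤ) ∣ P.eval 4 := by
  have h1 : cyclotomic p ℤ ∣ P := by
    rw [cyclotomic_eq_minpoly hζ hp.out.pos]
    exact minpoly.isIntegrallyClosed_dvd (hζ.isIntegral hp.out.pos) h
  have h2 : (cyclotomic p ℤ).eval 4 ∣ P.eval 4 := by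
    obtain ⟨Q, rfl⟩ := h1
    rw [eval_mul]; exact dvd_mul_right _ _
  have h3 : (cyclotomic p ℤ).eval 4 = M := by
    have e := congrArg (eval (4 : ℤ)) (cyclotomic_prime_mul_X_sub_one ℤ p)
    simp only [eval_mul, eval_sub, eval_X, eval_one, eval_pow] at e
    have h4 : (1:ℕ) ≤ 4 ^ p := Nat.one_le_pow _ _ (by norm_num)
    zify [h4] at hM
    linarith
  rwa [h3] at h2

lemma alg_core (R : Type*) [CommRing R] (p y a b G S U : R) (hG : G ^ 2 = p)
    (hab : a ^ 2 + b ^ 2 = -p) (hm : a * b = y * G) (hS : S = -1) (hU : 2 * U = 3 * S + G + 2 * (a + b))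
    (hU0 : U = 0) : (9 + 5 * p) ^ 2 - p * (6 + 8 * y) ^ 2 = 0 := by
  have h : 2 * (a + b) = 3 - G := by
    rw [hU0, hS] at hU; linear_combination -hU
  have hL : 9 + 5 * p - G * (6 + 8 * y) = 0 := by
    linear_combination (-(3 - G + 2 * (a + b))) * h - hG + 4 * hab + 8 * hm
  linear_combination (9 + 5 * p + G * (6 + 8 * y)) * hL + (6 + 8 * y) ^ 2 * hG

lemma floor_bound (p : ℕ) (hp : p.Prime) (hp8 : p % 8 = 5) (M : ℕ) (hM : 3 * M = 4 ^ p - 1)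
    (u : ℕ → ℕ) (h : Nat.gcd M (seqVal p u) ≤ 1 + 2 * p) :
    ⌊Real.logb 4 (((4 ^ p - 1 : ℕ) : ℝ) / ((3 * (1 + 2 * (p : ℝ)))) + 1)⌋ ≤
      adicComplexity4 p u := by
  have h4 : 4 ^ 1 ≤ 4 ^ p := Nat.pow_le_pow_right (by norm_num) hp.one_le
  have hg : Nat.gcd (4 ^ p - 1) (seqVal p u) ≤ 3 * (1 + 2 * p) := by
    rw [← hM]
    have hM0 : 0 < M := by omega
    have h1 : Nat.gcd (3 * M) (seqVal p u) ∣ 3 * Nat.gcd M (seqVal p u) := by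
      rw [← Nat.gcd_mul_left]
      exact Nat.gcd_dvd_gcd_mul_left_right _ _ _
    exact (Nat.le_of_dvd (Nat.mul_pos (by norm_num) (Nat.gcd_pos_of_pos_left _ hM0)) h1).trans
      (Nat.mul_le_mul_left 3 h)
  have hg0 : 0 < Nat.gcd (4 ^ p - 1) (seqVal p u) := Nat.gcd_pos_of_pos_left _ (by omega)
  unfold adicComplexity4
  apply Int.floor_mono
  apply Real.logb_le_logb_of_le (by norm_num)
  · positivity
  · gcongr
    exact_mod_cast hg

lemma main_facts (p θ : ℕ) (hp : p.Prime) (hp8 : p % 8 = 5)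
    (hθ : IsPrimitiveRoot (θ : ZMod p) (p - 1)) (M : ℕ) (hM : 3 * M = 4 ^ p - 1)  :
    ∃ x y : ℤ, (p : ℤ) = x ^ 2 + 4 * y ^ 2 ∧ ∀ e : ℕ → ℤ,
      (∀ i, e i = ∑ t ∈ cycD p θ i, (4 : ℤ) ^ t) →
      (M : ℤ) ∣ (e 0 - e 2) ^ 2 + (e 1 - e 3) ^ 2 + p ∧
      (M : ℤ) ∣ (e 0 - e 2) * (e 1 - e 3) - y * (e 0 - e 1 + e 2 - e 3) ∧
      (M : ℤ) ∣ (e 0 - e 1 + e 2 - e 3) ^ 2 - p ∧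
      (M : ℤ) ∣ 1 + (e 0 + e 1 + e 2 + e 3) := by
  have := Fact.mk hp
  have hζ := Complex.isPrimitiveRoot_exp p hp.ne_zero
  set ζ := Complex.exp (2 * Real.pi * Complex.I / p)
  obtain ⟨x, y, hxy, H⟩ := periods p θ hp8 hθ ζ hζ
  obtain ⟨H1, H2, H3⟩ := H _ _ _ _ rfl rfl rfl rfl
  have H4 := sum_range_cyc p θ hp hp8 hθ (fun t => ζ ^ t)
  rw [hζ.geom_sum_eq_zero hp.one_lt, pow_zero] at H4
  refine ⟨x, y, hxy, ?_⟩
  intro e he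
  let f : ℕ → Polynomial ℤ := fun i => ∑ t ∈ cycD p θ i, Polynomial.X ^ t
  have hf : ∀ i, (f i).eval 4 = e i := by
    intro i; rw [he]; simp [f, Polynomial.eval_finset_sum]
  have hfa : ∀ i, Polynomial.aeval ζ (f i) = ∑ t ∈ cycD p θ i, ζ ^ t := by
    intro i; simp [f]
  have T := transfer p ζ hζ M hM
  have t1 := T ((f 0 - f 2) ^ 2 + (f 1 - f 3) ^ 2 + Polynomial.C (p : ℤ)) (by
    simp only [map_add, map_sub, map_mul, map_pow, hfa, Polynomial.aeval_C, H1]; simp)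
  have t2 := T ((f 0 - f 2) * (f 1 - f 3) - Polynomial.C y * (f 0 - f 1 + f 2 - f 3)) (by
    simp only [map_add, map_sub, map_mul, map_pow, hfa, Polynomial.aeval_C, H2]; simp)
  have t3 := T ((f 0 - f 1 + f 2 - f 3) ^ 2 - Polynomial.C (p : ℤ)) (by
    simp only [map_add, map_sub, map_mul, map_pow, hfa, Polynomial.aeval_C, H3]; simp)
  have t4 := T (1 + (f 0 + f 1 + f 2 + f 3)) (by
    simp only [map_add, map_one, hfa]; exact H4.symm)
  simp only [Polynomial.eval_add, Polynomial.eval_sub, Polynomial.eval_mul, Polynomial.eval_pow,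
    Polynomial.eval_C, Polynomial.eval_one, hf] at t1 t2 t3 t4
  exact ⟨t1, t2, t3, t4⟩

lemma seqVal_eq (p θ : ℕ) (hp : p.Prime) (hp8 : p % 8 = 5)
    (hθ : IsPrimitiveRoot (θ : ZMod p) (p - 1)) (u : ℕ → ℕ) (c : ℕ → ℕ) (c' : ℕ)
    (h0 : u 0 = c') (h : ∀ i < 4, ∀ t ∈ cycD p θ i, u t = c i) (e : ℕ → ℤ)
    (he : ∀ i, e i = ∑ t ∈ cycD p θ i, (4 : ℤ) ^ t) :
    (seqVal p u : ℤ) = c' + c 0 * e 0 + c 1 * e 1 + c 2 * e 2 + c 3 * e 3 := by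
  unfold seqVal
  push_cast
  rw [sum_range_cyc p θ hp hp8 hθ]
  have : ∀ i < 4, ∑ t ∈ cycD p θ i, (u t : ℤ) * 4 ^ t = c i * e i := by
    intro i hi
    rw [he, Finset.mul_sum]
    exact Finset.sum_congr rfl fun t ht => by rw [h i hi t ht]
  rw [this 0 (by norm_num), this 1 (by norm_num), this 2 (by norm_num), this 3 (by norm_num), h0]
  ring

lemma finish (p θ : ℕ) (hp : p.Prime) (hp8 : p % 8 = 5)
    (hθ : IsPrimitiveRoot (θ : ZMod p) (p - 1)) (u : ℕ → ℕ) (c : ℕ → ℕ) (c' : ℕ)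
    (h0 : u 0 = c') (h : ∀ i < 4, ∀ t ∈ cycD p θ i, u t = c i)
    (hc : (c' = 0 ∧ c 0 = 3 ∧ c 1 = 2 ∧ c 2 = 1 ∧ c 3 = 0) ∨
      (c' = 0 ∧ c 0 = 0 ∧ c 1 = 3 ∧ c 2 = 2 ∧ c 3 = 1) ∨
      (c' = 3 ∧ c 0 = 3 ∧ c 1 = 0 ∧ c 2 = 1 ∧ c 3 = 2)) :
    ⌊Real.logb 4 (((4 ^ p - 1 : ℕ) : ℝ) / ((3 * (1 + 2 * (p : ℝ)))) + 1)⌋ ≤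
      adicComplexity4 p u := by
  obtain ⟨M, hM⟩ : ∃ M, 3 * M = 4 ^ p - 1 := by
    obtain ⟨M, hM⟩ : 4 - 1 ∣ 4 ^ p - 1 ^ p := Nat.sub_dvd_pow_sub_pow 4 1 p
    exact ⟨M, by simpa using hM.symm⟩
  apply floor_bound p hp hp8 M hM
  obtain ⟨x, y, hxy, H⟩ := main_facts p θ hp hp8 hθ M hM
  obtain ⟨e, he⟩ : ∃ e : ℕ → ℤ, ∀ i, e i = ∑ t ∈ cycD p θ i, (4 : ℤ) ^ t := ⟨_, fun _ => rfl⟩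
  obtain ⟨r1, r2, r3, r4⟩ := H e he
  have hU := seqVal_eq p θ hp hp8 hθ u c c' h0 h e he
  set d := Nat.gcd M (seqVal p u) with hd
  have hdM : d ∣ M := Nat.gcd_dvd_left _ _
  have hdU : d ∣ seqVal p u := Nat.gcd_dvd_right _ _
  refine nt_main p hp hp8 M hM x y hxy d hdM ?_
  have hdM' : (d : ℤ) ∣ M := by exact_mod_cast hdM
  have hdU' : (d : ℤ) ∣ (seqVal p u : ℤ) := by exact_mod_cast hdU
  replace r1 := (ZMod.intCast_zmod_eq_zero_iff_dvd _ d).2 (hdM'.trans r1)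
  replace r2 := (ZMod.intCast_zmod_eq_zero_iff_dvd _ d).2 (hdM'.trans r2)
  replace r3 := (ZMod.intCast_zmod_eq_zero_iff_dvd _ d).2 (hdM'.trans r3)
  replace r4 := (ZMod.intCast_zmod_eq_zero_iff_dvd _ d).2 (hdM'.trans r4)
  rw [hU] at hdU'
  have r5 := (ZMod.intCast_zmod_eq_zero_iff_dvd _ d).2 hdU'
  rw [← ZMod.intCast_zmod_eq_zero_iff_dvd]
  push_cast at r1 r2 r3 r4 r5 ⊢
  generalize (e 0 : ZMod d) = e0 at *
  generalize (e 1 : ZMod d) = e1 at *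
  generalize (e 2 : ZMod d) = e2 at *
  generalize (e 3 : ZMod d) = e3 at *
  rcases hc with ⟨k', k0, k1, k2, k3⟩ | ⟨k', k0, k1, k2, k3⟩ | ⟨k', k0, k1, k2, k3⟩ <;>
    rw [k', k0, k1, k2, k3] at r5 <;> push_cast at r5
  · exact alg_core (ZMod d) p y (e0 - e2) (e1 - e3) (e0 - e1 + e2 - e3) (e0 + e1 + e2 + e3)
      (3 * e0 + 2 * e1 + e2) (by linear_combination r3) (by linear_combination r1)
      (by linear_combination r2) (by linear_combination r4) (by ring) (by linear_combination r5)
  · exact alg_core (ZMod d) p y (-(e0 - e2)) (e1 - e3) (-(e0 - e1 + e2 - e3)) (e0 + e1 + e2 + e3)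
      (3 * e1 + 2 * e2 + e3) (by linear_combination r3) (by linear_combination r1)
      (by linear_combination -r2) (by linear_combination r4) (by ring) (by linear_combination r5)
  · exact alg_core (ZMod d) p y (-(e0 - e2)) (e1 - e3) (-(e0 - e1 + e2 - e3)) (e0 + e1 + e2 + e3)
      (3 * (e0 + e1 + e2 + e3) - (3 * e0 + e2 + 2 * e3))
      (by linear_combination r3) (by linear_combination r1)
      (by linear_combination -r2) (by linear_combination r4) (by ring)
      (by linear_combination 3 * r4 - r5)

lemma memCases (p θ : ℕ) (hp8 : p % 8 = 5)
    (hθ : IsPrimitiveRoot (θ : ZMod p) (p - 1)) (u : ℕ → ℕ) (c : ℕ → ℕ)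
    (h : ∀ i < 4, ∀ t, (∀ j < 4, t ∈ cycD p θ j ↔ j = i) → u t = c i) :
    ∀ i < 4, ∀ t ∈ cycD p θ i, u t = c i := by
  intro i hi t ht
  apply h i hi t
  intro j hj
  constructor
  · intro hj'
    by_contra hne
    exact cycD_disj p θ j i t hp8 hθ hj hi hne hj' ht
  · rintro rfl; exact ht

theorem theorem6
    (p : ℕ) (hp : p.Prime) (hp8 : p % 8 = 5)
    (x y : ℤ) (hx : x % 4 = 1) (hxy : (p : ℤ) = x ^ 2 + 4 * y ^ 2)
    (θ : ℕ) (hθ : IsPrimitiveRoot (θ : ZMod p) (p - 1))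
    (hy : 16 * (((cycD p θ 0).filter (fun a => (a + 1) % p ∈ cycD p θ 1)).card : ℤ)
        = (p : ℤ) + 1 + 2 * x - 8 * y)
    :
    ⌊Real.logb 4 (((4 ^ p - 1 : ℕ) : ℝ) / ((3 * (1 + 2 * (p : ℝ)))) + 1)⌋ ≤
      adicComplexity4 p (graySeq (seqS1 p θ) (seqS3 p θ)) ∧
    ⌊Real.logb 4 (((4 ^ p - 1 : ℕ) : ℝ) / ((3 * (1 + 2 * (p : ℝ)))) + 1)⌋ ≤
      adicComplexity4 p (graySeq (seqS3 p θ) (seqS4 p θ)) ∧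
    ⌊Real.logb 4 (((4 ^ p - 1 : ℕ) : ℝ) / ((3 * (1 + 2 * (p : ℝ)))) + 1)⌋ ≤
      adicComplexity4 p (graySeq (seqCompl (seqS3 p θ)) (seqS4 p θ)) := by
  have hz := fun i => zero_notMem_cycD p θ i hp hθ
  refine ⟨?_, ?_, ?_⟩
  · refine finish p θ hp hp8 hθ _ (fun i => [3, 2, 1, 0].getD i 0) 0 ?_
      (memCases p θ hp8 hθ _ _ ?_) (Or.inl ⟨rfl, rfl, rfl, rfl, rfl⟩)
    · simp [graySeq, gray, seqS1, seqS3, hz]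
    · intro i hi t ht
      have a0 := ht 0 (by norm_num)
      have a1 := ht 1 (by norm_num)
      have a2 := ht 2 (by norm_num)
      have a3 := ht 3 (by norm_num)
      interval_cases i <;> simp [graySeq, gray, seqS1, seqS3, a0, a1, a2]
  · refine finish p θ hp hp8 hθ _ (fun i => [0, 3, 2, 1].getD i 0) 0 ?_
      (memCases p θ hp8 hθ _ _ ?_) (Or.inr (Or.inl ⟨rfl, rfl, rfl, rfl, rfl⟩))
    · simp [graySeq, gray, seqS3, seqS4, hz]
    · intro i hi t ht
      have a0 := ht 0 (by norm_num)
      have a1 := ht 1 (by norm_num)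
      have a2 := ht 2 (by norm_num)
      have a3 := ht 3 (by norm_num)
      interval_cases i <;> simp [graySeq, gray, seqS3, seqS4, a1, a2, a3]
  · refine finish p θ hp hp8 hθ _ (fun i => [3, 0, 1, 2].getD i 0) 3 ?_
      (memCases p θ hp8 hθ _ _ ?_) (Or.inr (Or.inr ⟨rfl, rfl, rfl, rfl, rfl⟩))
    · simp [graySeq, gray, seqS3, seqS4, seqCompl, hz]
    · intro i hi t ht
      have a0 := ht 0 (by norm_num)
      have a1 := ht 1 (by norm_num)
      have a2 := ht 2 (by norm_num)
      have a3 := ht 3 (by norm_num)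
      interval_cases i <;> simp [graySeq, gray, seqS3, seqS4, seqCompl, a1, a2, a3]
end

section
/- Theorem 7: For the quaternary sequence u₁₆ = φ[s₃+1, s₄+1] of period p, the 4-adic complexity satisfies Φ₄(u₁₆) ≥ ⌊log₄((4^p − 1)/((1+2p)(1+6p)(1+8p)) + 1)⌋. -/
open Finset

lemma aux_norm {p : ℕ} [Fact p.Prime] (θ : ZMod p) (hθ : IsPrimitiveRoot θ (p - 1))
    (w : ZMod p → ℤ) (hw : ∀ t, w (θ ^ 4 * t) = w t) :
    ∃ n b : ℤ, ∀ (R : Type) [CommRing R] (ψ : AddChar (ZMod p) R),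
      (∑ t, (w t : R) * ψ t) * (∑ t, (w t : R) * ψ (θ * t)) * (∑ t, (w t : R) * ψ (θ ^ 2 * t))
        * (∑ t, (w t : R) * ψ (θ ^ 3 * t)) = n + b * ∑ t, ψ t := by
  have hp1 : p - 1 ≠ 0 := by have := (Fact.out : p.Prime).two_le; omega
  have hθ0 : θ ≠ 0 := hθ.ne_zero hp1
  let σ : AddMonoidAlgebra ℤ (ZMod p) →+* AddMonoidAlgebra ℤ (ZMod p) :=
    AddMonoidAlgebra.mapDomainRingHom ℤ (AddMonoidHom.mulLeft θ)
  let U : ZMod p → AddMonoidAlgebra ℤ (ZMod p) :=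
    fun k => ∑ t, AddMonoidAlgebra.single (k * t) (w t)
  have hσU : ∀ k, σ (U k) = U (θ * k) := by
    intro k
    simp only [σ, U, map_sum]
    refine Finset.sum_congr rfl fun t _ => ?_
    simp [mul_assoc]
  have hU4 : U (θ ^ 4) = U 1 := by
    simp only [U]
    refine Fintype.sum_bijective (fun t => θ ^ 4 * t) (mulLeft_bijective₀ _ (pow_ne_zero _ hθ0)) _ _ ?_
    intro t
    simp [hw]
  let P := U 1 * U θ * U (θ ^ 2) * U (θ ^ 3)
  have hP : σ P = P := by
    simp only [P, map_mul, hσU, ← pow_succ']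
    norm_num only [mul_one]
    rw [hU4, ← pow_two]
    ring
  have hcoef : ∀ t, P.coeff (θ * t) = P.coeff t := by
    intro t
    conv_lhs => rw [← hP]
    have : Function.Injective (fun t : ZMod p => θ * t) := mul_right_injective₀ hθ0
    have h := Finsupp.mapDomain_apply this P.coeff t
    simpa [σ] using h
  have hpow : ∀ i : ℕ, P.coeff (θ ^ i) = P.coeff 1 := by
    intro i
    induction i with
    | zero => simp
    | succ i ih => rw [pow_succ', hcoef, ih]
  have hall : ∀ t, t ≠ 0 → P.coeff t = P.coeff 1 := by
    intro t ht
    have : NeZero (p - 1) := ⟨hp1⟩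
    obtain ⟨i, -, rfl⟩ := hθ.eq_pow_of_pow_eq_one (ZMod.pow_card_sub_one_eq_one ht)
    exact hpow i
  refine ⟨P.coeff 0 - P.coeff 1, P.coeff 1, fun R _ ψ => ?_⟩
  let E := AddMonoidAlgebra.lift ℤ R (ZMod p) ψ.toMonoidHom
  have hE : ∀ f : AddMonoidAlgebra ℤ (ZMod p), E f = ∑ t, (f.coeff t : R) * ψ t := by
    intro f
    induction f using AddMonoidAlgebra.induction_on with
    | of m => simp [E, Finsupp.single_apply, AddMonoidAlgebra.of]
    | add x y hx hy => simp [hx, hy, add_mul, Finset.sum_add_distrib]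
    | smul r x hx => 
      rw [map_zsmul, hx, Finset.smul_sum]
      refine Finset.sum_congr rfl fun t _ => ?_
      rw [AddMonoidAlgebra.coeff_smul, Finsupp.smul_apply, smul_eq_mul, zsmul_eq_mul]
      push_cast
      ring
  have hEU : ∀ k, E (U k) = ∑ t, (w t : R) * ψ (k * t) := by
    intro k
    simp [E, U]
  have h2 : E P = E (U 1) * E (U θ) * E (U (θ ^ 2)) * E (U (θ ^ 3)) := by
    simp only [P, map_mul]
  have h1 := hE P
  rw [h2, hEU, hEU, hEU, hEU] at h1
  simp only [one_mul] at h1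
  clear_value P
  rw [h1, ← Finset.add_sum_erase univ _ (mem_univ (0 : ZMod p)),
    ← Finset.add_sum_erase univ (fun t => ψ t) (mem_univ (0 : ZMod p)), mul_add, Finset.mul_sum]
  have : ∀ t ∈ univ.erase (0 : ZMod p), ((P.coeff t : ℤ) : R) * ψ t = ((P.coeff 1 : ℤ) : R) * ψ t := by
    intro t ht
    rw [hall t (Finset.ne_of_mem_erase ht)]
  rw [Finset.sum_congr rfl this]
  simp only [AddChar.map_zero_eq_one]
  push_cast
  ring

lemma aux_parseval {p : ℕ} [Fact p.Prime] (ψ : AddChar (ZMod p) ℂ) (hψ : ψ.IsPrimitive)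
    (v : ZMod p → ℤ) :
    ∑ k, ‖∑ t, (v t : ℂ) * ψ (k * t)‖ ^ 2 = p * ∑ t, (v t : ℝ) ^ 2 := by
  have : ((∑ k, ‖∑ t, (v t : ℂ) * ψ (k * t)‖ ^ 2 : ℝ) : ℂ) = ((p * ∑ t, (v t : ℝ) ^ 2 : ℝ) : ℂ) := by
    push_cast
    have h1 : ∀ k, ((‖∑ t, (v t : ℂ) * ψ (k * t)‖ : ℂ)) ^ 2
        = ∑ t, ∑ s, (v t : ℂ) * (v s : ℂ) * ψ (k * (t - s)) := by
      intro k
      rw [← Complex.mul_conj', map_sum, Finset.sum_mul_sum]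
      refine Finset.sum_congr rfl fun t _ => Finset.sum_congr rfl fun s _ => ?_
      rw [map_mul (starRingEnd ℂ), ← AddChar.map_neg_eq_conj, mul_sub, sub_eq_add_neg, AddChar.map_add_eq_mul]
      simp
      ring
    simp only [h1]
    rw [Finset.sum_comm, Finset.mul_sum]
    refine Finset.sum_congr rfl fun t _ => ?_
    rw [Finset.sum_comm]
    simp only [← Finset.mul_sum, AddChar.sum_mulShift _ hψ, sub_eq_zero]
    simp [ZMod.card]
    ring
  exact_mod_cast this

lemma aux_ne {p : ℕ} [Fact p.Prime] (ζ : ℂ) (hζ : IsPrimitiveRoot ζ p) (w : ZMod p → ℤ)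
    (hw : ∃ t, w t ≠ w 0) : ∑ t, (w t : ℂ) * ζ ^ t.val ≠ 0 := by
  intro h0
  obtain ⟨t0, ht0⟩ := hw
  have hp := (Fact.out : p.Prime)
  let Q : Polynomial ℤ := ∑ t, Polynomial.C (w t) * Polynomial.X ^ t.val
  have hc : ∀ t, Q.coeff (ZMod.val t) = w t := by
    intro t
    simp only [Q, Polynomial.finsetSum_coeff, Polynomial.coeff_C_mul, Polynomial.coeff_X_pow]
    simp [ZMod.val_injective p |>.eq_iff]
  have hQ : Polynomial.aeval ζ Q = 0 := by
    simpa [Q] using h0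
  have hdvd : Polynomial.cyclotomic p ℤ ∣ Q := by
    rw [Polynomial.cyclotomic_eq_minpoly hζ hp.pos]
    exact minpoly.isIntegrallyClosed_dvd (hζ.isIntegral hp.pos) hQ
  have hdeg : Q.natDegree ≤ p - 1 := by
    refine Polynomial.natDegree_sum_le_of_forall_le _ _ fun t _ => ?_
    refine (Polynomial.natDegree_C_mul_X_pow_le _ _).trans ?_
    have := ZMod.val_lt t
    omega
  obtain ⟨T, hT⟩ := hdvd
  have hT0 : T.natDegree = 0 := by
    by_cases hz : T = 0
    · simp [hz]
    have := Polynomial.natDegree_mul (Polynomial.cyclotomic_ne_zero p ℤ) hz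
    rw [← hT, Polynomial.natDegree_cyclotomic, Nat.totient_prime hp] at this
    omega
  obtain ⟨c, rfl⟩ := Polynomial.natDegree_eq_zero.mp hT0
  have hcc : ∀ t : ZMod p, w t = c := by
    intro t
    rw [← hc t, hT, Polynomial.coeff_mul_C, Polynomial.cyclotomic_prime]
    simp [Polynomial.coeff_X_pow, ZMod.val_lt]
  exact ht0 (by rw [hcc, hcc])

lemma aux_bound {p : ℕ} [Fact p.Prime] (hp8 : p % 8 = 5) (θ : ZMod p)
    (hθ : IsPrimitiveRoot θ (p - 1))
    (w : ZMod p → ℤ) (hw : ∀ t, w (θ ^ 4 * t) = w t) (hw0 : ∀ t, 0 ≤ w t) (hw3 : ∀ t, w t ≤ 3)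
    (ψ : AddChar (ZMod p) ℂ) (hψ : ψ.IsPrimitive) (k : ZMod p) (hk : k ≠ 0) :
    ((p : ℝ) - 1) * ‖∑ t, (w t : ℂ) * ψ (k * t)‖ ^ 2 ≤ 9 * (p : ℝ) ^ 2 := by
  have hp5 : 5 ≤ p := by omega
  have hθ0 : θ ≠ 0 := hθ.ne_zero (by omega)
  let F : ZMod p → ℂ := fun k => ∑ t, (w t : ℂ) * ψ (k * t)
  have hF4 : ∀ k, F (θ ^ 4 * k) = F k := by
    intro k
    refine Fintype.sum_bijective (fun t => θ ^ 4 * t)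
      (mulLeft_bijective₀ _ (pow_ne_zero _ hθ0)) _ _ ?_
    intro t
    simp only [hw]
    congr 2
    ring
  have hF : ∀ i : ℕ, F (θ ^ (4 * i) * k) = F k := by
    intro i
    induction i with
    | zero => simp
    | succ i ih => rw [← ih, ← hF4 (θ ^ (4 * i) * k)]; congr 1; ring
  have hv : ∀ k, k ≠ 0 → ∑ t, ((2 * w t - 3 : ℤ) : ℂ) * ψ (k * t) = 2 * F k := by
    intro k hk
    have := AddChar.sum_mulShift k hψ
    rw [if_neg hk] at this
    simp only [mul_comm _ k] at this
    push_cast at this ⊢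
    simp only [sub_mul, Finset.sum_sub_distrib, mul_assoc, ← Finset.mul_sum, this]
    simp [F]
  have hpar := aux_parseval ψ hψ (fun t => 2 * w t - 3)
  have hle : ∑ t, (((2 * w t - 3 : ℤ)) : ℝ) ^ 2 ≤ p * 9 := by
    have : ∀ t ∈ (univ : Finset (ZMod p)), (((2 * w t - 3 : ℤ)) : ℝ) ^ 2 ≤ 9 := by
      intro t _
      have h : (2 * w t - 3 : ℤ) ^ 2 ≤ 9 := by nlinarith [hw0 t, hw3 t]
      exact_mod_cast h
    simpa [ZMod.card] using Finset.sum_le_card_nsmul _ _ _ this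
  have hinj : Set.InjOn (fun i : ℕ => θ ^ (4 * i) * k) (Finset.range ((p - 1) / 4)) := by
    intro i hi j hj hij
    simp only [Finset.coe_range, Set.mem_Iio] at hi hj
    have := hθ.pow_inj (by omega) (by omega) (mul_right_cancel₀ hk hij)
    omega
  have hsub : ∑ k' ∈ (Finset.range ((p - 1) / 4)).image (fun i : ℕ => θ ^ (4 * i) * k),
      ‖∑ t, ((2 * w t - 3 : ℤ) : ℂ) * ψ (k' * t)‖ ^ 2
      ≤ ∑ k', ‖∑ t, ((2 * w t - 3 : ℤ) : ℂ) * ψ (k' * t)‖ ^ 2 :=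
    Finset.sum_le_sum_of_subset_of_nonneg (Finset.subset_univ _) (fun _ _ _ => by positivity)
  rw [Finset.sum_image hinj, hpar] at hsub
  have hterm : ∀ i ∈ Finset.range ((p - 1) / 4),
      ‖∑ t, ((2 * w t - 3 : ℤ) : ℂ) * ψ (θ ^ (4 * i) * k * t)‖ ^ 2 = 4 * ‖F k‖ ^ 2 := by
    intro i _
    rw [hv _ (mul_ne_zero (pow_ne_zero _ hθ0) hk), hF, norm_mul, mul_pow]
    norm_num
  rw [Finset.sum_congr rfl hterm, Finset.sum_const, Finset.card_range, nsmul_eq_mul] at hsub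
  have hcast : (((p - 1) / 4 : ℕ) : ℝ) * 4 = (p : ℝ) - 1 := by
    have : (p - 1) / 4 * 4 + 1 = p := by omega
    have h : (((p - 1) / 4 : ℕ) : ℝ) * 4 + 1 = p := by exact_mod_cast this
    linarith
  have hp0 : (0 : ℝ) ≤ p := by positivity
  have := mul_le_mul_of_nonneg_left hle hp0
  change ((p : ℝ) - 1) * ‖F k‖ ^ 2 ≤ _
  rw [← hcast]
  nlinarith

lemma aux_main {p : ℕ} [Fact p.Prime] (hp8 : p % 8 = 5) (θ : ZMod p)
    (hθ : IsPrimitiveRoot θ (p - 1))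
    (w : ZMod p → ℤ) (hw : ∀ t, w (θ ^ 4 * t) = w t) (hw0 : ∀ t, 0 ≤ w t) (hw3 : ∀ t, w t ≤ 3)
    (hne : ∃ t, w t ≠ w 0) (d : ℕ) (hd1 : d ∣ 4 ^ p - 1)
    (hd2 : (d : ℤ) ∣ ∑ t, w t * 4 ^ (ZMod.val t)) :
    d ≤ (1 + 2 * p) * (1 + 6 * p) * (1 + 8 * p) := by
  have hp := (Fact.out : p.Prime)
  have hp5 : 5 ≤ p := by omega
  have hθ0 : θ ≠ 0 := hθ.ne_zero (by omega)
  obtain ⟨n, b, hnb⟩ := aux_norm θ hθ w hw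
  -- complex side
  have hζ := Complex.isPrimitiveRoot_exp p hp.ne_zero
  set ζ : ℂ := Complex.exp (2 * Real.pi * Complex.I / p) with hζdef
  let ψ : AddChar (ZMod p) ℂ := AddChar.zmodChar p hζ.pow_eq_one
  have hψ : ψ.IsPrimitive := AddChar.zmodChar_primitive_of_primitive_root p hζ
  have hsum : ∑ t, ψ t = 0 := by
    have := AddChar.sum_mulShift 1 hψ
    simpa using this
  have hn := hnb ℂ ψ
  rw [hsum, mul_zero, add_zero] at hn
  have hnz : ∀ k : ZMod p, k ≠ 0 → ∑ t, (w t : ℂ) * ψ (k * t) ≠ 0 := by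
    intro k hk
    have hprim : IsPrimitiveRoot (ζ ^ k.val) p := by
      refine hζ.pow_of_coprime _ ?_
      rw [Nat.coprime_comm]
      refine (Nat.Prime.coprime_iff_not_dvd hp).2 fun h => ?_
      exact hk ((ZMod.val_eq_zero k).1 (Nat.eq_zero_of_dvd_of_lt h (ZMod.val_lt k)))
    have := aux_ne _ hprim w hne
    convert this using 3 with t
    rw [← pow_mul]
    have h : k * t = ((k.val * t.val : ℕ) : ZMod p) := by simp
    rw [h, AddChar.zmodChar_apply']
  have hB := aux_bound hp8 θ hθ w hw hw0 hw3 ψ hψ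
  have h1 := hB 1 one_ne_zero
  have h2 := hB θ hθ0
  have h3 := hB (θ ^ 2) (pow_ne_zero _ hθ0)
  have h4 := hB (θ ^ 3) (pow_ne_zero _ hθ0)
  have z1 := hnz 1 one_ne_zero
  have z2 := hnz θ hθ0
  have z3 := hnz (θ ^ 2) (pow_ne_zero _ hθ0)
  have z4 := hnz (θ ^ 3) (pow_ne_zero _ hθ0)
  simp only [one_mul] at h1 z1
  have hn0 : n ≠ 0 := by
    rintro rfl
    rw [Int.cast_zero] at hn
    exact mul_ne_zero (mul_ne_zero (mul_ne_zero z1 z2) z3) z4 hn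
  have hnorm := congrArg (fun z : ℂ => ‖z‖) hn
  simp only [norm_mul, Complex.norm_intCast] at hnorm
  generalize ‖∑ t, (w t : ℂ) * ψ t‖ = A at *
  generalize ‖∑ t, (w t : ℂ) * ψ (θ * t)‖ = B at *
  generalize ‖∑ t, (w t : ℂ) * ψ (θ ^ 2 * t)‖ = C at *
  generalize ‖∑ t, (w t : ℂ) * ψ (θ ^ 3 * t)‖ = D at *
  have hpr : (5 : ℝ) ≤ p := by exact_mod_cast hp5
  have hp1 : (0 : ℝ) ≤ (p : ℝ) - 1 := by linarith
  have hsq : ((|(n : ℝ)|) * ((p : ℝ) - 1) ^ 2) ^ 2 ≤ (81 * (p : ℝ) ^ 4) ^ 2 := by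
    have e12 := mul_le_mul h1 h2 (by positivity) (by positivity)
    have e34 := mul_le_mul h3 h4 (by positivity) (by positivity)
    have e := mul_le_mul e12 e34 (by positivity) (by positivity)
    rw [← hnorm]
    calc _ = _ := by ring
      _ ≤ _ := e
      _ = _ := by ring
  have hle := (sq_le_sq₀ (by positivity) (by positivity)).1 hsq
  have hfin : 16 * |(n : ℝ)| ≤ 2025 * (p : ℝ) ^ 2 := by
    have hq : 16 * (p : ℝ) ^ 2 ≤ 25 * ((p : ℝ) - 1) ^ 2 := by nlinarith
    have h5 := mul_le_mul_of_nonneg_left hq (abs_nonneg (n : ℝ))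
    have hpp : (0 : ℝ) < (p : ℝ) ^ 2 := by positivity
    refine le_of_mul_le_mul_right ?_ hpp
    nlinarith
  have hfinZ : 16 * |n| ≤ 2025 * (p : ℤ) ^ 2 := by exact_mod_cast hfin
  -- modular side
  have hdvd : (d : ℤ) ∣ 3 * n := by
    have h4p : (4 : ZMod d) ^ p = 1 := by
      have h : ((4 ^ p - 1 : ℕ) : ZMod d) = 0 := (ZMod.natCast_eq_zero_iff _ _).2 hd1
      rw [Nat.cast_sub (Nat.one_le_pow _ _ (by norm_num))] at h
      push_cast at h
      exact sub_eq_zero.1 h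
    let χ : AddChar (ZMod p) (ZMod d) := AddChar.zmodChar p h4p
    have hχ := hnb (ZMod d) χ
    have h0 : ∑ t, (w t : ZMod d) * χ t = 0 := by
      have := (ZMod.intCast_zmod_eq_zero_iff_dvd _ d).2 hd2
      push_cast at this
      simpa [χ, AddChar.zmodChar_apply] using this
    have h3 : 3 * ∑ t, χ t = 0 := by
      have hs : ∑ t, χ (1 + t) = ∑ t, χ t :=
        Fintype.sum_equiv (Equiv.addLeft 1) _ _ (fun _ => rfl)
      simp only [AddChar.map_add_eq_mul, ← Finset.mul_sum] at hs
      have h1 : χ 1 = 4 := by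
        have := AddChar.zmodChar_apply' h4p 1
        simpa [χ] using this
      rw [h1] at hs
      linear_combination hs
    rw [h0] at hχ
    apply (ZMod.intCast_zmod_eq_zero_iff_dvd _ d).1
    push_cast
    linear_combination -3 * hχ - (b : ZMod d) * h3
  have hdle : (d : ℤ) ≤ 3 * |n| := by
    have := Int.le_of_dvd (by positivity) ((dvd_abs _ _).2 hdvd)
    rwa [abs_mul, abs_of_nonneg (by norm_num : (0 : ℤ) ≤ 3)] at this
  have hp5' : (5 : ℤ) ≤ p := by exact_mod_cast hp5
  zify
  nlinarith [mul_le_mul_of_nonneg_left hp5' (sq_nonneg (p : ℤ))]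

lemma aux_mem_s18 (p θ i : ℕ) [Fact p.Prime] (hp8 : p % 8 = 5)
    (hθ : IsPrimitiveRoot (θ : ZMod p) (p - 1)) (t : ZMod p) :
    t.val ∈ cycD p θ i ↔ ∃ j : ℕ, t = (θ : ZMod p) ^ (i + 4 * j) := by
  have hval : ∀ e : ℕ, t.val = θ ^ e % p ↔ t = (θ : ZMod p) ^ e := by
    intro e
    rw [← ZMod.val_natCast, (ZMod.val_injective p).eq_iff]
    push_cast
    rfl
  simp only [cycD, Finset.mem_image, Finset.mem_range]
  constructor
  · rintro ⟨j, -, hj⟩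
    exact ⟨j, (hval _).1 hj.symm⟩
  · rintro ⟨j, hj⟩
    refine ⟨j % ((p - 1) / 4), Nat.mod_lt _ (by omega), ((hval _).2 ?_).symm⟩
    rw [hj]
    conv_lhs => rw [← Nat.div_add_mod j ((p - 1) / 4)]
    have h4 : 4 * ((p - 1) / 4) = p - 1 := by omega
    rw [mul_add, ← mul_assoc, h4, add_left_comm, pow_add, pow_mul, hθ.pow_eq_one, one_pow, one_mul]

lemma aux_gray (a b : ℕ) : gray (1 - a) (1 - b) ≤ 3 := by
  unfold gray
  split <;> omega

lemma aux_mem4 (p θ i : ℕ) [Fact p.Prime] (hp8 : p % 8 = 5)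
    (hθ : IsPrimitiveRoot (θ : ZMod p) (p - 1)) (t : ZMod p) :
    ((θ : ZMod p) ^ 4 * t).val ∈ cycD p θ i ↔ t.val ∈ cycD p θ i := by
  rw [aux_mem_s18 p θ i hp8 hθ, aux_mem_s18 p θ i hp8 hθ]
  have h1 := hθ.pow_eq_one
  obtain ⟨m, hm⟩ : ∃ m, p - 1 = 4 + 4 * m := ⟨(p - 5) / 4, by omega⟩
  rw [hm] at h1
  constructor
  · rintro ⟨j, hj⟩
    refine ⟨j + m, ?_⟩
    calc t = (θ : ZMod p) ^ (4 + 4 * m) * t := by rw [h1, one_mul]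
      _ = (θ : ZMod p) ^ (4 * m) * ((θ : ZMod p) ^ 4 * t) := by ring
      _ = _ := by rw [hj]; ring
  · rintro ⟨j, rfl⟩
    exact ⟨j + 1, by ring⟩

theorem theorem7
    (p : ℕ) (hp : p.Prime) (hp8 : p % 8 = 5)
    (x y : ℤ) (hx : x % 4 = 1) (hxy : (p : ℤ) = x ^ 2 + 4 * y ^ 2)
    (θ : ℕ) (hθ : IsPrimitiveRoot (θ : ZMod p) (p - 1))
    (hy : 16 * (((cycD p θ 0).filter (fun a => (a + 1) % p ∈ cycD p θ 1)).card : ℤ)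
        = (p : ℤ) + 1 + 2 * x - 8 * y)
    :
    ⌊Real.logb 4 (((4 ^ p - 1 : ℕ) : ℝ) / (((1 + 2 * (p : ℝ)) * (1 + 6 * (p : ℝ)) * (1 + 8 * (p : ℝ)))) + 1)⌋ ≤
      adicComplexity4 p (graySeq (seqCompl (seqS3 p θ)) (seqCompl (seqS4 p θ))) := by
  have : Fact p.Prime := ⟨hp⟩
  unfold adicComplexity4
  set u := graySeq (seqCompl (seqS3 p θ)) (seqCompl (seqS4 p θ)) with hu
  have hθ0 : (θ : ZMod p) ≠ 0 := hθ.ne_zero (by omega)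
  have hzero : ∀ i, (0 : ZMod p).val ∉ cycD p θ i := by
    intro i
    rw [aux_mem_s18 p θ i hp8 hθ]
    rintro ⟨j, hj⟩
    exact pow_ne_zero _ hθ0 hj.symm
  have htwo : ((θ : ZMod p) ^ 2).val ∈ cycD p θ 2 := by
    rw [aux_mem_s18 p θ 2 hp8 hθ]
    exact ⟨0, by simp⟩
  have h3 : ∀ t, u t ≤ 3 := by
    intro t
    exact aux_gray _ _
  have hd : Nat.gcd (4 ^ p - 1) (seqVal p u) ≤ (1 + 2 * p) * (1 + 6 * p) * (1 + 8 * p) := by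
    refine aux_main hp8 (θ : ZMod p) hθ (fun t => (u t.val : ℤ)) ?_ ?_ ?_ ?_ _
      (Nat.gcd_dvd_left _ _) ?_
    · intro t
      simp only [hu, graySeq, seqCompl, seqS3, seqS4, Finset.mem_union, aux_mem4 p θ _ hp8 hθ]
    · intro t
      positivity
    · intro t
      exact_mod_cast h3 _
    · refine ⟨(θ : ZMod p) ^ 2, ?_⟩
      simp only [hu, graySeq, seqCompl, seqS3, seqS4, Finset.mem_union, hzero, htwo]
      simp [gray]
    · have hs : ∑ t : ZMod p, (u t.val : ℤ) * 4 ^ t.val = (seqVal p u : ℤ) := by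
        unfold seqVal
        push_cast
        refine Finset.sum_nbij' (fun t => t.val) (fun t : ℕ => (t : ZMod p)) ?_ ?_ ?_ ?_ ?_
        · intro t _
          simpa using ZMod.val_lt t
        · intro t _
          simp
        · intro t _
          simp
        · intro t ht
          exact ZMod.val_cast_of_lt (Finset.mem_range.1 ht)
        · intro t _
          rfl
      rw [hs]
      exact_mod_cast Nat.gcd_dvd_right _ _
  have hM : 0 < 4 ^ p - 1 := by
    have := Nat.one_lt_pow hp.ne_zero (by norm_num : 1 < 4)
    omega
  have hg : 0 < Nat.gcd (4 ^ p - 1) (seqVal p u) := Nat.gcd_pos_of_pos_left _ hM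
  have hdR : ((Nat.gcd (4 ^ p - 1) (seqVal p u) : ℕ) : ℝ)
      ≤ (1 + 2 * (p : ℝ)) * (1 + 6 * (p : ℝ)) * (1 + 8 * (p : ℝ)) := by exact_mod_cast hd
  have hgR : (0 : ℝ) < ((Nat.gcd (4 ^ p - 1) (seqVal p u) : ℕ) : ℝ) := by exact_mod_cast hg
  apply Int.floor_le_floor
  apply Real.logb_le_logb_of_le (by norm_num) (by positivity)
  gcongr
end
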